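/- Let G be a group having a nilpotent subgroup of finite index. Let (G, X, 0) be an expansive 0-gluing pointed dynamical system whose homoclinic points are dense in X. Then every asymptotically nilpotent endomorphism f : X → X of (G, X, 0) is nilpotent. -/

import Mathlib

/-- A point `x` is homoclinic: `g • x` is eventually close to `x₀` outside finite
subsets of `G`. -/
def Homoclinic (G : Type) [Group G] {X : Type} [MetricSpace X] [MulAction G X]
    (x₀ x : X) : Prop :=
  ∀ ε : ℝ, 0 < ε → ∃ E : Finset G, ∀ g : G, g ∉ E → dist (g • x) x₀ < ε

/-- The `0`-gluing property of a pointed dynamical system. -/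
def ZeroGluing (G : Type) [Group G] {X : Type} [MetricSpace X] [MulAction G X]
    (x₀ : X) : Prop :=
  ∀ ε : ℝ, 0 < ε → ∃ δ : ℝ, 0 < δ ∧ ∃ E : Finset G,
    ∀ (I : Type) (A : I → Set G) (p : I → X),
      (∀ g : G, ∃! i : I, g ∈ A i) →
      (∀ i : I, ∀ g ∈ A i, (∃ e ∈ E, e * g ∉ A i) → dist (g • p i) x₀ < δ) →
      ∃ y : X, ∀ i : I, ∀ g ∈ A i, dist (g • y) (g • p i) < ε

section material
open Filter Topology
open scoped Pointwise
open scoped commutatorElement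

/-- `g` is within `N` of the set `S`. -/
def Hit {G : Type} [Group G] (N : Finset G) (S : Set G) (g : G) : Prop :=
  ∃ n ∈ N, n * g ∈ S

/-- Gluing of well separated points. -/
def Glues {G X : Type} [Group G] [MetricSpace X] [MulAction G X]
    (x₀ : X) (Δ η : ℝ) (N : Finset G) : Prop :=
  ∀ (I : Type) (S : I → Set G) (p : I → X),
    (∀ i g, g ∉ S i → dist (g • p i) x₀ ≤ Δ / 4) →
    (∀ i j, i ≠ j → ∀ g, Hit N (S i) g → ¬ Hit N (S j) g) →
    ∃ y : X, (∀ i g, (∀ j, j ≠ i → ¬ Hit N (S j) g) → dist (g • y) (g • p i) < η) ∧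
      (∀ g, (∀ j, ¬ Hit N (S j) g) → dist (g • y) x₀ < η)

theorem Hit.mono {G : Type} [Group G] {N N' : Finset G} (h : N ⊆ N') {S : Set G} {g : G}
    (hh : Hit N S g) : Hit N' S g := by
  obtain ⟨n, hn, hg⟩ := hh
  exact ⟨n, h hn, hg⟩

theorem Glues.mono {G X : Type} [Group G] [MetricSpace X] [MulAction G X]
    {x₀ : X} {Δ η : ℝ} {N N' : Finset G} (h : N ⊆ N') (hg : Glues x₀ Δ η N) :
    Glues x₀ Δ η N' := by
  intro I S p h1 h2
  obtain ⟨y, y1, y2⟩ := hg I S p h1 (fun i j hij g a b => h2 i j hij g (a.mono h) (b.mono h))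
  exact ⟨y, fun i g hh => y1 i g (fun j hj a => hh j hj (a.mono h)),
    fun g hh => y2 g (fun j a => hh j (a.mono h))⟩

/-- Compactness form of expansivity. -/
theorem expansive_finite {G X : Type} [Group G] [MetricSpace X] [CompactSpace X] [MulAction G X]
    {Δ : ℝ} (cont : ∀ g : G, Continuous fun x : X => g • x)
    (exp : ∀ x y : X, (∀ g : G, dist (g • x) (g • y) ≤ Δ) → x = y) (η : ℝ) (hη : 0 < η) :
    ∃ N : Finset G, ∀ x y : X, (∀ g ∈ N, dist (g • x) (g • y) ≤ Δ) → dist x y < η := by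
  have hK : IsCompact {p : X × X | η ≤ dist p.1 p.2} :=
    (isClosed_le continuous_const (continuous_fst.dist continuous_snd)).isCompact
  obtain ⟨N, hN⟩ := hK.elim_finite_subfamily_closed
    (fun g : G => {p : X × X | dist (g • p.1) (g • p.2) ≤ Δ})
    (fun g => isClosed_le (((cont g).comp continuous_fst).dist ((cont g).comp continuous_snd))
      continuous_const) (by
      ext p
      simp only [Set.mem_inter_iff, Set.mem_ofPred_eq, Set.mem_iInter, Set.mem_empty_iff_false,
        iff_false, not_and]
      intro h1 h2
      have := exp p.1 p.2 h2
      rw [this, dist_self] at h1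
      linarith)
  refine ⟨N, fun x y h => ?_⟩
  by_contra hcon
  have : (x, y) ∈ ({p : X × X | η ≤ dist p.1 p.2} ∩
      ⋂ g ∈ N, {p : X × X | dist (g • p.1) (g • p.2) ≤ Δ}) := by
    refine ⟨not_lt.mp hcon, ?_⟩
    simp only [Set.mem_iInter, Set.mem_ofPred_eq]
    exact h
  rw [hN] at this
  exact this

theorem glue_all {G X : Type} [Group G] [MetricSpace X] [CompactSpace X] [MulAction G X]
    {x₀ : X} {Δ η₀ : ℝ} (cont : ∀ g : G, Continuous fun x : X => g • x)
    (fix : ∀ g : G, g • x₀ = x₀)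
    (exp : ∀ x y : X, (∀ g : G, dist (g • x) (g • y) ≤ Δ) → x = y) (h0 : η₀ ≤ Δ)
    {N : Finset G} (hN : Glues x₀ Δ η₀ N) (η : ℝ) (hη : 0 < η) :
    ∃ N' : Finset G, Glues x₀ Δ η N' := by
  classical
  obtain ⟨M, hM⟩ := expansive_finite cont exp η hη
  refine ⟨N * M ∪ N, ?_⟩
  have hsub : N ⊆ N * M ∪ N := Finset.subset_union_right
  have key : ∀ (S : Set G) (g h : G), h ∈ M → ¬ Hit (N * M ∪ N) S g → ¬ Hit N S (h * g) := by
    rintro S g h hh hn ⟨n, hn1, hn2⟩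
    exact hn ⟨n * h, Finset.mem_union_left _ (Finset.mul_mem_mul hn1 hh), by
      rwa [mul_assoc]⟩
  intro I S p h1 h2
  obtain ⟨y, y1, y2⟩ := hN I S p h1 (fun i j hij g a b => h2 i j hij g (a.mono hsub) (b.mono hsub))
  refine ⟨y, fun i g hh => hM _ _ fun h hh' => ?_, fun g hh => hM _ _ fun h hh' => ?_⟩
  · rw [smul_smul, smul_smul]
    exact (y1 i (h * g) (fun j hj => key _ _ _ hh' (hh j hj))).le.trans h0
  · rw [smul_smul, fix]
    exact (y2 (h * g) (fun j => key _ _ _ hh' (hh j))).le.trans h0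

theorem glues_of_zeroGluing {G X : Type} [Group G] [MetricSpace X] [CompactSpace X] [MulAction G X]
    {x₀ : X} {Δ : ℝ} (hΔ : 0 < Δ) (cont : ∀ g : G, Continuous fun x : X => g • x)
    (fix : ∀ g : G, g • x₀ = x₀)
    (exp : ∀ x y : X, (∀ g : G, dist (g • x) (g • y) ≤ Δ) → x = y)
    (hglue : ZeroGluing G x₀) (η : ℝ) (hη : 0 < η) :
    ∃ N : Finset G, Glues x₀ Δ η N := by
  classical
  obtain ⟨δ, hδ, E, hE⟩ := hglue (η / 2) (by positivity)
  obtain ⟨N1, hN1⟩ := expansive_finite cont exp δ hδ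
  obtain ⟨N2, hN2⟩ := expansive_finite cont exp (η / 2) (by positivity)
  refine ⟨N1 * E⁻¹ ∪ (N1 ∪ N2), ?_⟩
  set N := N1 * E⁻¹ ∪ (N1 ∪ N2) with hN
  intro I S p h1 h2
  have far : ∀ (M : Finset G) (c : ℝ),
      (∀ x y : X, (∀ g ∈ M, dist (g • x) (g • y) ≤ Δ) → dist x y < c) →
      ∀ i g, ¬ Hit M (S i) g → dist (g • p i) x₀ < c := by
    intro M c hM i g hg
    refine hM _ _ fun h hh => ?_
    rw [smul_smul, fix]
    refine (h1 i _ fun hmem => hg ⟨h, hh, hmem⟩).trans ?_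
    linarith
  obtain ⟨y, hy⟩ := hE (Option I)
    (fun o => match o with
      | none => {g | ∀ i, ¬ Hit N (S i) g}
      | some i => {g | Hit N (S i) g})
    (fun o => match o with
      | none => x₀
      | some i => p i) (by
      intro g
      by_cases hg : ∃ i, Hit N (S i) g
      · obtain ⟨i, hi⟩ := hg
        refine ⟨some i, hi, ?_⟩
        rintro (_ | j) hj
        · exact absurd hi (hj i)
        · by_contra hne
          exact h2 j i (fun h => hne (by rw [h])) g hj hi
      · push Not at hg
        refine ⟨none, hg, ?_⟩
        rintro (_ | j) hj
        · rfl
        · exact absurd hj (hg j)) (by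
      rintro (_ | i) g hg ⟨e, he, heg⟩
      · simpa [fix] using hδ
      · refine far N1 δ hN1 i g ?_
        rintro ⟨h, hh, hm⟩
        refine heg ⟨h * e⁻¹, ?_, ?_⟩
        · exact Finset.mem_union_left _ (Finset.mul_mem_mul hh (Finset.inv_mem_inv he))
        · simpa [mul_assoc] using hm)
  have hnone : ∀ g, (∀ j, ¬ Hit N (S j) g) → dist (g • y) x₀ < η / 2 := by
    intro g hg
    have := hy none g hg
    simpa only [fix] using this
  refine ⟨y, fun i g hg => ?_, fun g hg => (hnone g hg).trans (by linarith)⟩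
  by_cases hi : Hit N (S i) g
  · exact (hy (some i) g hi).trans (by linarith)
  · have hall : ∀ j, ¬ Hit N (S j) g := by
      intro j
      by_cases hj : j = i
      · rwa [hj]
      · exact hg j hj
    have a := hnone g hall
    have b := far N2 (η / 2) hN2 i g (fun h => hi (h.mono (by
      intro x hx; simp [hN, hx])))
    have := dist_triangle_right (g • y) (g • p i) x₀
    linarith

/-- The standing assumptions on an expansive gluing system with an asymptotically nilpotent
endomorphism. -/
structure Sys (G X : Type) [Group G] [MetricSpace X] [CompactSpace X] [MulAction G X]
    (x₀ : X) (f : X → X) (Δ : ℝ) : Prop where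
  cont : ∀ g : G, Continuous fun x : X => g • x
  fix : ∀ g : G, g • x₀ = x₀
  pos : 0 < Δ
  exp : ∀ x y : X, (∀ g : G, dist (g • x) (g • y) ≤ Δ) → x = y
  glue : ∀ η : ℝ, 0 < η → ∃ N : Finset G, Glues x₀ Δ η N
  fc : Continuous f
  f0 : f x₀ = x₀
  feq : ∀ (g : G) (x : X), f (g • x) = g • f x
  AN : ∀ x : X, Tendsto (fun n => f^[n] x) atTop (𝓝 x₀)

section basics
variable {G X : Type} [Group G] [MetricSpace X] [CompactSpace X] [MulAction G X]
  {x₀ : X} {f : X → X} {Δ : ℝ}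

theorem Sys.E1 (s : Sys G X x₀ f Δ) (η : ℝ) (hη : 0 < η) :
    ∃ N : Finset G, ∀ x y : X, (∀ g ∈ N, dist (g • x) (g • y) ≤ Δ) → dist x y < η :=
  expansive_finite s.cont s.exp η hη

theorem Sys.iter0 (s : Sys G X x₀ f Δ) (t : ℕ) : f^[t] x₀ = x₀ :=
  Function.iterate_fixed s.f0 t

theorem Sys.itereq (s : Sys G X x₀ f Δ) (t : ℕ) (g : G) (x : X) :
    f^[t] (g • x) = g • f^[t] x :=
  Function.Commute.iterate_left (f := f) (g := fun y => g • y) (fun y => s.feq g y) t x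

theorem Sys.iterc (s : Sys G X x₀ f Δ) (t : ℕ) : Continuous f^[t] := s.fc.iterate t

theorem Sys.E2 (s : Sys G X x₀ f Δ) (t : ℕ) (η : ℝ) (hη : 0 < η) :
    ∃ N : Finset G, ∀ (x y : X) (g : G),
      (∀ n ∈ N, dist ((n * g) • x) ((n * g) • y) ≤ Δ) →
      dist (g • f^[t] x) (g • f^[t] y) < η := by
  have huc := CompactSpace.uniformContinuous_of_continuous (s.iterc t)
  obtain ⟨ρ, hρ, h⟩ := Metric.uniformContinuous_iff.mp huc η hη
  obtain ⟨N, hN⟩ := s.E1 ρ hρ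
  refine ⟨N, fun x y g hg => ?_⟩
  rw [← s.itereq, ← s.itereq]
  apply h
  apply hN
  intro n hn
  rw [smul_smul, smul_smul]
  exact hg n hn

theorem Sys.mort_mono (s : Sys G X x₀ f Δ) {x : X} {n t : ℕ} (h : f^[n] x = x₀) (ht : n ≤ t) :
    f^[t] x = x₀ := by
  obtain ⟨k, rfl⟩ := Nat.exists_eq_add_of_le ht
  rw [add_comm, Function.iterate_add_apply, h, s.iter0]

theorem Sys.ev (s : Sys G X x₀ f Δ) (W : Finset G) (η : ℝ) (hη : 0 < η) (x : X) :
    ∃ n, ∀ t ≥ n, ∀ g ∈ W, dist (g • f^[t] x) x₀ < η := by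
  have : ∀ᶠ t in atTop, ∀ g ∈ W, dist (g • f^[t] x) x₀ < η := by
    rw [Filter.eventually_all_finset]
    intro g _
    have h1 : Tendsto (fun t => g • f^[t] x) atTop (𝓝 (g • x₀)) :=
      ((s.cont g).tendsto x₀).comp (s.AN x)
    rw [s.fix] at h1
    exact Metric.tendsto_nhds.mp h1 η hη
  exact eventually_atTop.mp this

theorem Sys.baire (s : Sys G X x₀ f Δ) (S : Set X) (hS : S.Nonempty) (W : Finset G) (η : ℝ)
    (hη : 0 < η) : ∃ b ∈ S, ∃ ρ > 0, ∃ n : ℕ, ∀ x ∈ S, dist x b < ρ →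
      ∀ t ≥ n, ∀ g ∈ W, dist (g • f^[t] x) x₀ ≤ η := by
  have : CompactSpace (closure S) := isCompact_iff_compactSpace.mp isClosed_closure.isCompact
  have : Nonempty (closure S) := hS.closure.to_subtype
  let C : ℕ → Set (closure S) := fun n =>
    {y | ∀ t ≥ n, ∀ g ∈ W, dist (g • f^[t] (y : X)) x₀ ≤ η}
  have hC : ∀ n, IsClosed (C n) := by
    intro n
    have : C n = ⋂ t, ⋂ (_ : t ≥ n), ⋂ g, ⋂ (_ : g ∈ W),
        {y : closure S | dist (g • f^[t] (y : X)) x₀ ≤ η} := by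
      ext y; simp [C]
    rw [this]
    refine isClosed_iInter fun t => isClosed_iInter fun _ => isClosed_iInter fun g =>
      isClosed_iInter fun _ => isClosed_le ?_ continuous_const
    exact (((s.cont g).comp ((s.iterc t).comp continuous_subtype_val))).dist continuous_const
  have hU : ⋃ n, C n = Set.univ := by
    ext y
    simp only [Set.mem_iUnion, Set.mem_univ, iff_true]
    obtain ⟨n, hn⟩ := s.ev W η hη y
    exact ⟨n, fun t ht g hg => (hn t ht g hg).le⟩
  obtain ⟨n, y, hy⟩ := nonempty_interior_of_iUnion_of_closed hC hU
  obtain ⟨r, hr, hball⟩ := Metric.isOpen_iff.mp isOpen_interior y hy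
  obtain ⟨b, hb, hyb⟩ := Metric.mem_closure_iff.mp y.2 (r / 2) (by positivity)
  refine ⟨b, hb, r / 2, by positivity, n, fun x hx hxb => ?_⟩
  have hx' : (⟨x, subset_closure hx⟩ : closure S) ∈ C n := by
    apply interior_subset
    apply hball
    rw [Metric.mem_ball, Subtype.dist_eq]
    have := dist_triangle x b (y : X)
    rw [dist_comm] at hyb
    show dist x (y : X) < r
    linarith
  exact hx'

theorem Sys.mort (s : Sys G X x₀ f Δ) {x : X} (F : Finset G) (t0 : ℕ)
    (h : ∀ t ≥ t0, ∀ g, g ∉ F → dist (g • f^[t] x) x₀ ≤ Δ) : ∃ n, f^[n] x = x₀ := by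
  obtain ⟨n, hn⟩ := s.ev F Δ s.pos x
  refine ⟨max n t0, s.exp _ _ fun g => ?_⟩
  rw [s.fix]
  by_cases hg : g ∈ F
  · exact (hn _ (le_max_left _ _) g hg).le
  · exact h _ (le_max_right _ _) g hg

end basics

/-- `g` lies in `F * B`. -/
def InB {G : Type} [Group G] (B : Subgroup G) (F : Finset G) (g : G) : Prop :=
  ∃ a ∈ F, ∃ β ∈ B, g = a * β

section lemA
variable {G X : Type} [Group G] [MetricSpace X] [CompactSpace X] [MulAction G X]
  {x₀ : X} {f : X → X} {Δ : ℝ}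

theorem InB.mono {B : Subgroup G} {F F' : Finset G} (h : F ⊆ F') {g : G} (hg : InB B F g) :
    InB B F' g := by
  obtain ⟨a, ha, b, hb, e⟩ := hg
  exact ⟨a, h ha, b, hb, e⟩

open Classical in
theorem InB.mul {B : Subgroup G} {F N : Finset G} {g n : G} (hg : InB B F g) (hn : n ∈ N) :
    InB B (N * F) (n * g) := by
  obtain ⟨a, ha, b, hb, e⟩ := hg
  exact ⟨n * a, Finset.mul_mem_mul hn ha, b, hb, by rw [e, mul_assoc]⟩

open Classical in
theorem InB.of_mul {B : Subgroup G} {F N : Finset G} {g n : G} (hg : InB B F (n * g))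
    (hn : n ∈ N) : InB B (N⁻¹ * F) g := by
  have := hg.mul (Finset.inv_mem_inv hn)
  rwa [inv_mul_cancel_left] at this

theorem Glues.two {η : ℝ} {N : Finset G} (hN : Glues x₀ Δ η N) (S1 S2 : Set G) (p1 p2 : X)
    (h1 : ∀ g, g ∉ S1 → dist (g • p1) x₀ ≤ Δ / 4) (h2 : ∀ g, g ∉ S2 → dist (g • p2) x₀ ≤ Δ / 4)
    (h : ∀ g, Hit N S1 g → ¬ Hit N S2 g) :
    ∃ y : X, (∀ g, ¬ Hit N S2 g → dist (g • y) (g • p1) < η) ∧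
      (∀ g, ¬ Hit N S1 g → dist (g • y) (g • p2) < η) ∧
      (∀ g, ¬ Hit N S1 g → ¬ Hit N S2 g → dist (g • y) x₀ < η) := by
  obtain ⟨y, y1, y2⟩ := hN Bool (fun b => if b then S1 else S2) (fun b => if b then p1 else p2)
    (by
      intro i g
      cases i
      · simpa using h2 g
      · simpa using h1 g) (by
      intro i j hij g
      cases i <;> cases j
      · simp at hij
      · simpa using fun a b => h g b a
      · simpa using h g
      · simp at hij)
  refine ⟨y, fun g hg => ?_, fun g hg => ?_, fun g hg hg' => ?_⟩
  · simpa using y1 true g (by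
      intro j hj
      cases j
      · simpa using hg
      · simp at hj)
  · simpa using y1 false g (by
      intro j hj
      cases j
      · simp at hj
      · simpa using hg)
  · refine y2 g ?_
    intro j
    cases j
    · simpa using hg'
    · simpa using hg

theorem Sys.glue1 (s : Sys G X x₀ f Δ) (η : ℝ) (hη : 0 < η) :
    ∃ N : Finset G, 1 ∈ N ∧ Glues x₀ Δ η N := by
  classical
  obtain ⟨N, hN⟩ := s.glue η hη
  exact ⟨insert 1 N, Finset.mem_insert_self _ _, hN.mono (Finset.subset_insert _ _)⟩

theorem Sys.lemA (s : Sys G X x₀ f Δ) (B : Subgroup G) :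
    ∃ (R : Finset G) (T : ℕ), ∀ x : X, (∃ n, f^[n] x = x₀) →
      (∃ F : Finset G, ∀ g, ¬ InB B F g → dist (g • x) x₀ ≤ Δ / 4) →
      (∀ g, InB B R g → dist (g • x) x₀ ≤ Δ / 4) →
      ∀ t ≥ T, dist (f^[t] x) x₀ ≤ Δ / 8 := by
  classical
  have hp := s.pos
  obtain ⟨X0, ⟨⟨T0, hT0⟩, F0, hF0⟩, ρ, hρ, n, hn⟩ := s.baire
    {x : X | (∃ n, f^[n] x = x₀) ∧ ∃ F : Finset G, ∀ g, ¬ InB B F g → dist (g • x) x₀ ≤ Δ / 4}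
    ⟨x₀, ⟨0, rfl⟩, ∅, fun g _ => by rw [s.fix, dist_self]; positivity⟩ {1} (Δ / 8) (by positivity)
  obtain ⟨NT, hNT⟩ := s.E2 T0 (Δ / 2) (by positivity)
  obtain ⟨Nρ, hNρ⟩ := s.E1 ρ hρ
  obtain ⟨N, hN1, hN⟩ := s.glue1 (Δ / 4) (by positivity)
  refine ⟨N * (N⁻¹ * F0) ∪ (N * Nρ ∪ N * (NT * (NT⁻¹ * (N⁻¹ * F0)))), max n T0, ?_⟩
  rintro x ⟨nx, hnx⟩ ⟨F, hF⟩ hR t ht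
  obtain ⟨y, y1, y2, y3⟩ := hN.two {g | InB B F0 g} {g | ¬ dist (g • x) x₀ ≤ Δ / 4} X0 x
    (fun g hg => hF0 g hg) (fun g hg => not_not.mp hg) (by
      rintro g ⟨a, ha, ha'⟩ ⟨b, hb, hb'⟩
      refine hb' (hR _ (InB.mono ?_ ((InB.of_mul ha' ha).mul hb)))
      exact Finset.subset_union_left)
  have hyρ : dist y X0 < ρ := by
    refine hNρ _ _ fun h hh => (y1 h ?_).le.trans (by linarith)
    rintro ⟨b, hb, hb'⟩
    refine hb' (hR _ ⟨b * h, ?_, 1, B.one_mem, by simp⟩)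
    exact Finset.mem_union_right _ (Finset.mem_union_left _ (Finset.mul_mem_mul hb hh))
  have heq : f^[T0] y = f^[T0] x := by
    apply s.exp
    intro g
    by_cases hA : ∀ m ∈ NT, ¬ Hit N {g | InB B F0 g} (m * g)
    · refine (hNT y x g fun m hm => (y2 _ (hA m hm)).le.trans (by linarith)).le.trans (by linarith)
    · push Not at hA
      obtain ⟨m, hm, a, ha, ha'⟩ := hA
      have hB : ∀ m' ∈ NT, ¬ Hit N {g | ¬ dist (g • x) x₀ ≤ Δ / 4} (m' * g) := by
        rintro m' hm' ⟨b, hb, hb'⟩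
        refine hb' (hR _ (InB.mono ?_ ((((InB.of_mul ha' ha).of_mul hm).mul hm').mul hb)))
        exact Finset.subset_union_right.trans Finset.subset_union_right
      have c1 := hNT y X0 g (fun m' hm' => (y1 _ (hB m' hm')).le.trans (by linarith))
      have c2 := hNT x x₀ g (fun m' hm' => by
        have := hB m' hm'
        rw [s.fix]
        by_contra hcon
        refine this ⟨1, hN1, ?_⟩
        intro hh
        rw [one_mul] at hh
        linarith)
      rw [hT0, s.fix] at c1
      rw [s.iter0, s.fix] at c2
      have := dist_triangle_right (g • f^[T0] y) (g • f^[T0] x) x₀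
      linarith
  have hyt : f^[t] x = f^[t] y := by
    obtain ⟨k, rfl⟩ := Nat.exists_eq_add_of_le ((le_max_right _ _).trans ht)
    rw [add_comm, Function.iterate_add_apply, Function.iterate_add_apply, heq]
  have := hn y ⟨⟨max nx T0, ?_⟩, N⁻¹ * F0 ∪ N⁻¹ * F, ?_⟩ hyρ t ((le_max_left _ _).trans ht) 1
    (by simp)
  · rw [one_smul] at this
    rwa [hyt]
  · have h1 := s.mort_mono hnx (le_max_left nx T0)
    obtain ⟨k, hk⟩ := Nat.exists_eq_add_of_le (le_max_right nx T0)
    rw [hk, add_comm, Function.iterate_add_apply] at h1 ⊢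
    rw [heq, h1]
  · intro g hg
    refine (y3 g ?_ ?_).le
    · rintro ⟨a, ha, ha'⟩
      exact hg ((InB.of_mul ha' ha).mono Finset.subset_union_left)
    · rintro ⟨a, ha, ha'⟩
      refine ha' (hF _ fun hh => hg ((InB.of_mul hh ha).mono Finset.subset_union_right))

end lemA

section beta
variable {G X : Type} [Group G] [MetricSpace X] [CompactSpace X] [MulAction G X]
  {x₀ : X} {f : X → X} {Δ : ℝ}

theorem sparse {z : G} (hz : ¬ IsOfFinOrder z) (Q : Finset G) :
    ∃ r : ℤ, 0 < r ∧ ∀ m : ℤ, z ^ m ∈ Q → |m| < r := by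
  classical
  have hinj := injective_zpow_iff_not_isOfFinOrder.mpr hz
  have hfin : Set.Finite {m : ℤ | z ^ m ∈ Q} := Q.finite_toSet.preimage hinj.injOn
  obtain ⟨M, hM⟩ := (hfin.image (fun m => |m|)).bddAbove
  refine ⟨max M 0 + 1, by positivity, fun m hm => ?_⟩
  have : |m| ≤ M := hM ⟨m, hm, rfl⟩
  have := le_max_left M 0
  omega

theorem zpow_central {z : G} (hz : ∀ g : G, z * g = g * z) (m : ℤ) (g : G) :
    z ^ m * g = g * z ^ m := by
  have : Commute z g := hz g
  exact (this.zpow_left m).eq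

def NearZ (z : G) (F N : Finset G) (i l : ℤ) (g : G) : Prop :=
  ∃ n ∈ N, n * g * z ^ (-(i * l)) ∈ F

structure Beta (x₀ : X) (z : G) (x : X) (F N : Finset G) (i : ℤ) (η : ℝ) (β : Set ℤ → X) :
    Prop where
  b1 : ∀ S : Set ℤ, ∀ j ∈ S, ∀ g, (∀ l ∈ S, l ≠ j → ¬ NearZ z F N i l g) →
    dist (g • β S) (g • z ^ (-(i * j)) • x) < η
  b2 : ∀ S : Set ℤ, ∀ g, (∀ l ∈ S, ¬ NearZ z F N i l g) → dist (g • β S) x₀ < η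
  b3 : ∀ g l l', NearZ z F N i l g → NearZ z F N i l' g → l = l'

theorem near_bdd {z : G} (hzc : ∀ g : G, z * g = g * z) (hz : ¬ IsOfFinOrder z) (F N D : Finset G) :
    ∃ r : ℤ, 0 < r ∧ ∀ d ∈ D, ∀ i l m : ℤ, NearZ z F N i l (d * z ^ m) → |i * l - m| < r := by
  classical
  obtain ⟨r, hr, h⟩ := sparse hz (F⁻¹ * (N * D))
  refine ⟨r, hr, ?_⟩
  rintro d hd i l m ⟨n, hn, hm⟩
  refine h _ ?_
  have : z ^ (i * l - m) = (n * (d * z ^ m) * z ^ (-(i * l)))⁻¹ * (n * d) := by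
    rw [show n * (d * z ^ m) * z ^ (-(i * l)) = (n * d) * z ^ (m - i * l) by
      rw [← mul_assoc, mul_assoc (n * d), ← zpow_add, sub_eq_add_neg]]
    rw [mul_inv_rev, ← zpow_neg, mul_assoc, inv_mul_cancel, mul_one]
    congr 1
    ring
  rw [this]
  exact Finset.mul_mem_mul (Finset.inv_mem_inv hm) (Finset.mul_mem_mul hn hd)

theorem Sys.beta (s : Sys G X x₀ f Δ) {z : G} (hzc : ∀ g : G, z * g = g * z)
    (hz : ¬ IsOfFinOrder z) (x : X) (F : Finset G)
    (hF : ∀ g, g ∉ F → dist (g • x) x₀ ≤ Δ / 4) (η : ℝ) (hη : 0 < η) :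
    ∃ (N : Finset G) (I0 : ℤ), ∀ i ≥ I0, ∃ β, Beta x₀ z x F N i η β := by
  classical
  obtain ⟨N, hN⟩ := s.glue η hη
  obtain ⟨r, hr, hbd⟩ := sparse hz ((N⁻¹ * F)⁻¹ * (N⁻¹ * F))
  refine ⟨N, r, fun i hi => ?_⟩
  have b3 : ∀ g l l', NearZ z F N i l g → NearZ z F N i l' g → l = l' := by
    rintro g l l' ⟨n, hn, h⟩ ⟨n', hn', h'⟩
    have hm : z ^ (i * (l - l')) = (n⁻¹ * (n * g * z ^ (-(i * l))))⁻¹ *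
        (n'⁻¹ * (n' * g * z ^ (-(i * l')))) := by
      have e : i * (l - l') = i * l + -(i * l') := by ring
      rw [e, zpow_add]
      simp only [zpow_neg]
      group
    have h1 : |i * (l - l')| < r := by
      apply hbd
      rw [hm]
      exact Finset.mul_mem_mul (Finset.inv_mem_inv (Finset.mul_mem_mul (Finset.inv_mem_inv hn) h))
        (Finset.mul_mem_mul (Finset.inv_mem_inv hn') h')
    by_contra hne
    have h2 : 1 ≤ |l - l'| := Int.one_le_abs (sub_ne_zero.mpr hne)
    rw [abs_mul] at h1
    have h3 : i ≤ |i| := le_abs_self i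
    nlinarith
  have key : ∀ S : Set ℤ, ∃ y : X, (∀ j ∈ S, ∀ g, (∀ l ∈ S, l ≠ j → ¬ NearZ z F N i l g) →
      dist (g • y) (g • z ^ (-(i * j)) • x) < η) ∧
      (∀ g, (∀ l ∈ S, ¬ NearZ z F N i l g) → dist (g • y) x₀ < η) := by
    intro S
    have hnear : ∀ l g, Hit N {g : G | g * z ^ (-(i * l)) ∈ F} g ↔ NearZ z F N i l g :=
      fun l g => Iff.rfl
    obtain ⟨y, y1, y2⟩ := hN S (fun l => {g | g * z ^ (-(i * (l : ℤ))) ∈ F})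
      (fun l => z ^ (-(i * (l : ℤ))) • x) (by
        intro l g hg
        rw [smul_smul]
        exact hF _ hg) (by
        intro l l' hne g h h'
        rw [hnear] at h h'
        exact hne (Subtype.ext (b3 g _ _ h h')))
    refine ⟨y, fun j hj g hg => y1 ⟨j, hj⟩ g ?_, fun g hg => y2 g ?_⟩
    · intro l hl
      rw [hnear]
      exact hg l l.2 (fun h => hl (Subtype.ext h))
    · intro l
      rw [hnear]
      exact hg l l.2
  choose β hβ using key
  exact ⟨β, fun S => (hβ S).1, fun S => (hβ S).2, b3⟩

variable {z : G} {x : X} {F N : Finset G} {i : ℤ} {η : ℝ} {β : Set ℤ → X}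

theorem NearZ.shift (k l : ℤ) (g : G) :
    NearZ z F N i (l + k) (g * z ^ (i * k)) ↔ NearZ z F N i l g := by
  have : ∀ n : G, n * (g * z ^ (i * k)) * z ^ (-(i * (l + k))) = n * g * z ^ (-(i * l)) := by
    intro n
    rw [← mul_assoc, mul_assoc (n * g), ← zpow_add]
    congr 2
    ring
  simp only [NearZ, this]

theorem Beta.agree (hβ : Beta x₀ z x F N i η β) (k : ℤ) (S S' : Set ℤ) (g : G)
    (h : ∀ l, NearZ z F N i l g → (l + k ∈ S ↔ l ∈ S')) :
    dist ((g * z ^ (i * k)) • β S) (g • β S') < 2 * η := by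
  by_cases hl : ∃ l ∈ S', NearZ z F N i l g
  · obtain ⟨l, hlS, hl⟩ := hl
    have a := hβ.b1 S' l hlS g (fun l' _ hne hn => hne (hβ.b3 g _ _ hn hl))
    have hl' := (NearZ.shift k l g).mpr hl
    have b := hβ.b1 S (l + k) ((h l hl).mpr hlS) (g * z ^ (i * k))
      (fun l' _ hne hn => hne (hβ.b3 _ _ _ hn hl'))
    have e : (g * z ^ (i * k)) • z ^ (-(i * (l + k))) • x = g • z ^ (-(i * l)) • x := by
      rw [smul_smul, smul_smul, mul_assoc, ← zpow_add]
      congr 3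
      ring
    rw [e] at b
    have := dist_triangle_right ((g * z ^ (i * k)) • β S) (g • β S') (g • z ^ (-(i * l)) • x)
    linarith
  · push Not at hl
    have a := hβ.b2 S' g hl
    have b := hβ.b2 S (g * z ^ (i * k)) (by
      intro l hlS hn
      have hn' : NearZ z F N i (l - k) g := by
        rw [← NearZ.shift k, sub_add_cancel]; exact hn
      exact hl (l - k) ((h _ hn').mp (by rwa [sub_add_cancel])) hn')
    have := dist_triangle_right ((g * z ^ (i * k)) • β S) (g • β S') x₀
    linarith

theorem Sys.beta_shift (s : Sys G X x₀ f Δ) (hβ : Beta x₀ z x F N i η β) (hη : 2 * η ≤ Δ) (k : ℤ)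
    (S S' : Set ℤ) (h : ∀ l, l + k ∈ S ↔ l ∈ S') : z ^ (i * k) • β S = β S' := by
  apply s.exp
  intro g
  rw [smul_smul]
  exact (hβ.agree k S S' g (fun l _ => h l)).le.trans hη

theorem Sys.beta_empty (s : Sys G X x₀ f Δ) (hβ : Beta x₀ z x F N i η β) (hη : η ≤ Δ) :
    β ∅ = x₀ := by
  apply s.exp
  intro g
  rw [s.fix]
  exact (hβ.b2 ∅ g (by simp)).le.trans hη

theorem Sys.beta_local (s : Sys G X x₀ f Δ) (hzc : ∀ g : G, z * g = g * z)
    (hz : ¬ IsOfFinOrder z) (hβ : Beta x₀ z x F N i η β) (hη : 2 * η ≤ Δ) (τ : ℕ) (D : Finset G)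
    (c : ℝ) (hc : 0 < c) :
    ∃ r : ℤ, 0 < r ∧ ∀ d ∈ D, ∀ m : ℤ, ∀ S S' : Set ℤ,
      (∀ l, |i * l - m| < r → (l ∈ S ↔ l ∈ S')) →
      dist ((d * z ^ m) • f^[τ] (β S)) ((d * z ^ m) • f^[τ] (β S')) < c := by
  classical
  obtain ⟨M, hM⟩ := s.E2 τ c hc
  obtain ⟨r, hr, hb⟩ := near_bdd hzc hz F N (M * D)
  refine ⟨r, hr, fun d hd m S S' h => hM _ _ _ fun n hn => ?_⟩
  have := hβ.agree 0 S S' (n * (d * z ^ m)) (by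
    intro l hl
    rw [add_zero]
    refine h l (hb (n * d) (Finset.mul_mem_mul hn hd) i l m ?_)
    rwa [mul_assoc])
  rw [mul_zero, zpow_zero, mul_one] at this
  linarith

theorem Sys.beta_lim (s : Sys G X x₀ f Δ) (hzc : ∀ g : G, z * g = g * z)
    (hz : ¬ IsOfFinOrder z) (hβ : Beta x₀ z x F N i η β) (hη : 2 * η ≤ Δ) (hi : 1 ≤ i)
    (C : Set X) (hC : IsClosed C) (S : Set ℤ)
    (h : ∀ L : ℤ, ∃ S' : Set ℤ, (∀ l, |l| < L → (l ∈ S ↔ l ∈ S')) ∧ β S' ∈ C) : β S ∈ C := by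
  rw [← hC.closure_eq, Metric.mem_closure_iff]
  intro c hc
  obtain ⟨r, hr, hb⟩ := s.beta_local hzc hz hβ hη 0 {1} c hc
  obtain ⟨S', hS', hm⟩ := h r
  refine ⟨_, hm, ?_⟩
  have := hb 1 (by simp) 0 S S' (by
    intro l hl
    apply hS'
    rw [sub_zero, abs_mul] at hl
    have : i ≤ |i| := le_abs_self i
    have := abs_nonneg l
    nlinarith)
  simpa using this

theorem Sys.beta_hom (s : Sys G X x₀ f Δ) (hzc : ∀ g : G, z * g = g * z)
    (hβ : Beta x₀ z x F N i η β) (hη : η ≤ Δ / 4) (S : Finset ℤ) :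
    ∃ K : Finset G, ∀ g, g ∉ K → dist (g • β S) x₀ ≤ Δ / 4 := by
  classical
  refine ⟨N⁻¹ * (F * S.image (fun l => z ^ (i * l))), fun g hg => (hβ.b2 S g ?_).le.trans hη⟩
  rintro l hl ⟨n, hn, hm⟩
  apply hg
  have : g = n⁻¹ * ((n * g * z ^ (-(i * l))) * z ^ (i * l)) := by
    rw [zpow_neg]; group
  rw [this]
  exact Finset.mul_mem_mul (Finset.inv_mem_inv hn) (Finset.mul_mem_mul hm
    (Finset.mem_image_of_mem _ hl))

theorem Sys.beta_close (s : Sys G X x₀ f Δ) (hzc : ∀ g : G, z * g = g * z)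
    (hz : ¬ IsOfFinOrder z) (x : X) (F N : Finset G) (ρ : ℝ) (hρ : 0 < ρ) :
    ∃ I1 : ℤ, ∀ i ≥ I1, ∀ η ≤ Δ, ∀ β, Beta x₀ z x F N i η β → ∀ S : Set ℤ, 0 ∈ S →
      dist (β S) x < ρ := by
  obtain ⟨M, hM⟩ := s.E1 ρ hρ
  obtain ⟨r, hr, hb⟩ := near_bdd hzc hz F N M
  refine ⟨r, fun i hi η hη β hβ S hS => hM _ _ fun g hg => ?_⟩
  have := hβ.b1 S 0 hS g (by
    intro l _ hl hn
    have := hb g hg i l 0 (by simpa using hn)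
    rw [sub_zero, abs_mul] at this
    have h2 : 1 ≤ |l| := Int.one_le_abs hl
    have h3 : i ≤ |i| := le_abs_self i
    nlinarith)
  simp only [mul_zero, neg_zero, zpow_zero, one_smul] at this
  linarith

end beta

section oneD
variable {G X : Type} [Group G] [MetricSpace X] [CompactSpace X] [MulAction G X]
  {x₀ : X} {f : X → X} {Δ : ℝ}

theorem Sys.lemA_bot (s : Sys G X x₀ f Δ) :
    ∃ (R : Finset G) (T : ℕ), ∀ x : X, (∃ n, f^[n] x = x₀) →
      (∃ F : Finset G, ∀ g, g ∉ F → dist (g • x) x₀ ≤ Δ / 4) →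
      (∀ g ∈ R, dist (g • x) x₀ ≤ Δ / 4) →
      ∀ t ≥ T, dist (f^[t] x) x₀ ≤ Δ / 8 := by
  obtain ⟨R, T, h⟩ := s.lemA ⊥
  refine ⟨R, T, fun x hm hF hR => h x hm ?_ ?_⟩
  · obtain ⟨F, hF⟩ := hF
    exact ⟨F, fun g hg => hF g fun hh => hg ⟨g, hh, 1, Subgroup.one_mem _, by simp⟩⟩
  · rintro g ⟨a, ha, b, hb, rfl⟩
    rw [Subgroup.mem_bot] at hb
    rw [hb, mul_one]
    exact hR a ha

/-- column heights reached from a column. -/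
theorem col_bdd {z : G} (hz : ¬ IsOfFinOrder z) (Q D : Finset G) :
    ∃ r : ℤ, 0 < r ∧ ∀ n ∈ Q, ∀ d ∈ D, ∀ d' ∈ D, ∀ m m' : ℤ,
      n * (d * z ^ m) = d' * z ^ m' → |m' - m| < r := by
  classical
  obtain ⟨r, hr, h⟩ := sparse hz (D⁻¹ * (Q * D))
  refine ⟨r, hr, fun n hn d hd d' hd' m m' e => h _ ?_⟩
  have : z ^ (m' - m) = d'⁻¹ * (n * d) := by
    rw [sub_eq_add_neg, zpow_add, zpow_neg, eq_inv_mul_iff_mul_eq, ← mul_assoc, ← e]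
    group
  rw [this]
  exact Finset.mul_mem_mul (Finset.inv_mem_inv hd') (Finset.mul_mem_mul hn hd)

variable {z : G} {x : X} {F N : Finset G} {i : ℤ} {η : ℝ} {β : Set ℤ → X}

theorem Sys.oneD (s : Sys G X x₀ f Δ) (hzc : ∀ g : G, z * g = g * z)
    (hz : ¬ IsOfFinOrder z) (hβ : Beta x₀ z x F N i η β) (hη : 2 * η ≤ Δ) (hη0 : 0 < η) (hi : 1 ≤ i)
    (D : Finset G) (r : ℤ) (hr : 0 < r) (T1 : ℕ)
    (ha : ∀ S, ∀ t ≥ T1, ∀ g, (∀ d ∈ D, ∀ m : ℤ, g ≠ d * z ^ m) →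
      dist (g • f^[t] (β S)) x₀ ≤ Δ / 4)
    (hb : ∀ S, ∀ j ∈ S, ∀ t ≥ T1, ∀ d ∈ D, ∀ m : ℤ, i * j ≤ m → m ≤ i * j + r →
      dist ((d * z ^ m) • f^[t] (β S)) x₀ ≤ Δ / 4)
    (hc : ∀ y : X, (∀ g, (∀ d ∈ D, ∀ m : ℤ, g ≠ d * z ^ m) → dist (g • y) x₀ ≤ Δ / 4) →
      ∀ d ∈ D, ∀ m : ℤ, (∀ d' ∈ D, ∀ m', |m' - m| < r → dist ((d' * z ^ m') • y) x₀ ≤ Δ / 4) →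
      dist ((d * z ^ m) • f y) x₀ ≤ Δ / 4)
    (hu : ∃ n, f^[n] (β Set.univ) = x₀) :
    ∃ M : ℤ, 0 < M ∧ ∃ n, f^[n] (β (Set.Icc (-M) M)) = x₀ := by
  classical
  have hp := s.pos
  obtain ⟨T0, hT0⟩ := hu
  set T := max T0 T1 with hT
  have hTu := s.mort_mono hT0 (le_max_left T0 T1)
  rw [← hT] at hTu
  have hT1 : T1 ≤ T := le_max_right _ _
  have hemp := s.beta_empty hβ (by linarith)
  obtain ⟨rT, hrT, hloc⟩ := s.beta_local hzc hz hβ hη T D (Δ / 4) (by positivity)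
  obtain ⟨R, T', hA⟩ := s.lemA_bot
  obtain ⟨r2, hr2, hcol⟩ := col_bdd hz R D
  -- the finite mass outside a bounded window
  have mortal_of : ∀ y : X, ∀ a b : ℤ, ∀ t0 : ℕ,
      (∀ t ≥ t0, ∀ g, (∀ d ∈ D, ∀ m : ℤ, g ≠ d * z ^ m) → dist (g • f^[t] y) x₀ ≤ Δ / 4) →
      (∀ t ≥ t0, ∀ d ∈ D, ∀ m : ℤ, (m ≤ a ∨ b ≤ m) → dist ((d * z ^ m) • f^[t] y) x₀ ≤ Δ / 4) →
      (∃ n, f^[n] y = x₀) ∧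
        ∀ t ≥ t0, ∃ K : Finset G, ∀ g, g ∉ K → dist (g • f^[t] y) x₀ ≤ Δ / 4 := by
    intro y a b t0 h1 h2
    have key : ∀ t ≥ t0, ∀ g, g ∉ D * (Finset.Icc a b).image (fun m => z ^ m) →
        dist (g • f^[t] y) x₀ ≤ Δ / 4 := by
      intro t ht g hg
      by_cases hcol : ∀ d ∈ D, ∀ m : ℤ, g ≠ d * z ^ m
      · exact h1 t ht g hcol
      · push Not at hcol
        obtain ⟨d, hd, m, rfl⟩ := hcol
        refine h2 t ht d hd m ?_
        by_contra hcon
        push Not at hcon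
        exact hg (Finset.mul_mem_mul hd (Finset.mem_image_of_mem _
          (Finset.mem_Icc.mpr ⟨hcon.1.le, hcon.2.le⟩)))
    exact ⟨s.mort _ t0 (fun t ht g hg => (key t ht g hg).trans (by linarith)),
      fun t ht => ⟨_, key t ht⟩⟩
  set A := i * (r + rT) with hAdef
  have hrA : r + rT ≤ A := by nlinarith
  have main : ∀ m1 m2 : ℤ, m1 < m2 → ∀ t ≥ T + T', ∀ d ∈ D, ∀ m : ℤ,
      (m ≤ i * m1 - A ∨ i * m2 + A ≤ m ∨ (i * m1 + (rT + r2) ≤ m ∧ m ≤ i * m2 - (rT + r2))) →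
      dist ((d * z ^ m) • f^[t] (β (Set.Iic m1 ∪ Set.Ici m2))) x₀ ≤ Δ / 4 := by
    intro m1 m2 hm12
    set P : Set ℤ := Set.Iic m1 ∪ Set.Ici m2 with hP
    have left0 : ∀ d ∈ D, ∀ m : ℤ, (m ≤ i * m1 - rT ∨ i * m2 + rT ≤ m) →
        dist ((d * z ^ m) • f^[T] (β P)) x₀ ≤ Δ / 4 := by
      intro d hd m hm
      have := hloc d hd m P Set.univ (by
        intro l hl
        simp only [Set.mem_univ, iff_true]
        rw [abs_lt] at hl
        rcases hm with hm | hm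
        · left
          show l ≤ m1
          by_contra hcon
          push Not at hcon
          nlinarith
        · right
          show m2 ≤ l
          by_contra hcon
          push Not at hcon
          nlinarith)
      rw [hTu, s.fix] at this
      exact this.le
    have mid0 : ∀ d ∈ D, ∀ m : ℤ, i * m1 + rT ≤ m → m ≤ i * m2 - rT →
        dist ((d * z ^ m) • f^[T] (β P)) x₀ ≤ Δ / 4 := by
      intro d hd m hm hm'
      have := hloc d hd m P ∅ (by
        intro l hl
        simp only [Set.mem_empty_iff_false, iff_false]
        rw [abs_lt] at hl
        rintro (h | h)
        · have h : l ≤ m1 := h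
          nlinarith
        · have h : m2 ≤ l := h
          nlinarith)
      rw [hemp, s.iter0, s.fix] at this
      exact this.le
    have barL : ∀ k : ℕ, ∀ d ∈ D, ∀ m : ℤ, m ≤ i * (m1 - (r + rT)) + r →
        dist ((d * z ^ m) • f^[T + k] (β P)) x₀ ≤ Δ / 4 := by
      intro k
      induction k with
      | zero =>
        intro d hd m hm
        refine left0 d hd m (Or.inl ?_)
        nlinarith
      | succ k ih =>
        intro d hd m hm
        by_cases hm' : i * (m1 - (r + rT)) ≤ m
        · refine hb P (m1 - (r + rT)) (Or.inl ?_) _ (by omega) d hd m hm' hm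
          show m1 - (r + rT) ≤ m1
          linarith
        · rw [← add_assoc, Function.iterate_succ_apply']
          refine hc _ (ha P _ (by omega)) d hd m fun d' hd' m' hmm => ih d' hd' m' ?_
          rw [abs_lt] at hmm
          linarith
    have barR : ∀ k : ℕ, ∀ d ∈ D, ∀ m : ℤ, i * (m2 + (r + rT)) ≤ m →
        dist ((d * z ^ m) • f^[T + k] (β P)) x₀ ≤ Δ / 4 := by
      intro k
      induction k with
      | zero =>
        intro d hd m hm
        refine left0 d hd m (Or.inr ?_)
        nlinarith
      | succ k ih =>
        intro d hd m hm
        by_cases hm' : m ≤ i * (m2 + (r + rT)) + r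
        · refine hb P (m2 + (r + rT)) (Or.inr ?_) _ (by omega) d hd m hm hm'
          show m2 ≤ m2 + (r + rT)
          linarith
        · rw [← add_assoc, Function.iterate_succ_apply']
          refine hc _ (ha P _ (by omega)) d hd m fun d' hd' m' hmm => ih d' hd' m' ?_
          rw [abs_lt] at hmm
          linarith
    have bar : ∀ t ≥ T, ∀ d ∈ D, ∀ m : ℤ, (m ≤ i * m1 - A ∨ i * m2 + A ≤ m) →
        dist ((d * z ^ m) • f^[t] (β P)) x₀ ≤ Δ / 4 := by
      intro t ht d hd m hm
      obtain ⟨k, rfl⟩ := Nat.exists_eq_add_of_le ht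
      rcases hm with hm | hm
      · exact barL k d hd m (by nlinarith)
      · exact barR k d hd m (by nlinarith)
    obtain ⟨⟨n, hn⟩, hK⟩ := mortal_of (β P) _ _ T (fun t ht => ha P t (by omega)) bar
    obtain ⟨K, hK⟩ := hK T le_rfl
    intro t ht d hd m hm
    rcases hm with hm | hm | ⟨hm, hm'⟩
    · exact bar t (by omega) d hd m (Or.inl hm)
    · exact bar t (by omega) d hd m (Or.inr hm)
    · have := hA ((d * z ^ m) • f^[T] (β P)) ⟨n, by
          rw [s.itereq, ← Function.iterate_add_apply, s.mort_mono hn (by omega), s.fix]⟩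
        ⟨K * {(d * z ^ m)⁻¹}, by
          intro g hg
          rw [smul_smul]
          refine hK _ fun hmem => hg ?_
          have : g = (g * (d * z ^ m)) * (d * z ^ m)⁻¹ := by group
          rw [this]
          exact Finset.mul_mem_mul hmem (Finset.mem_singleton_self _)⟩ (by
          intro a haR
          rw [smul_smul]
          by_cases hcl : ∀ d' ∈ D, ∀ m' : ℤ, a * (d * z ^ m) ≠ d' * z ^ m'
          · exact ha P T hT1 _ hcl
          · push Not at hcl
            obtain ⟨d', hd', m', e⟩ := hcl
            have hlt := hcol a haR d hd d' hd' m m' e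
            rw [abs_lt] at hlt
            rw [e]
            exact mid0 d' hd' m' (by linarith) (by linarith)) (t - T) (by omega)
      rw [s.itereq, ← Function.iterate_add_apply, Nat.sub_add_cancel (by omega)] at this
      linarith
  have closedC : ∀ (g : G) (t : ℕ), IsClosed {y : X | dist (g • f^[t] y) x₀ ≤ Δ / 4} := fun g t =>
    isClosed_le (((s.cont g).comp (s.iterc t)).dist continuous_const) continuous_const
  obtain ⟨⟨nL, hnL⟩, -⟩ := mortal_of (β (Set.Iic 0)) (-A) (rT + r2) (T + T')
    (fun t ht => ha _ t (by omega)) (by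
      intro t ht d hd m hm
      refine s.beta_lim hzc hz hβ hη hi _ (closedC (d * z ^ m) t) (Set.Iic 0) fun L => ?_
      refine ⟨Set.Iic 0 ∪ Set.Ici (max L 1 + |m| + (rT + r2)), ?_, ?_⟩
      · intro l hl
        constructor
        · intro h; exact Or.inl h
        · rintro (h | h)
          · exact h
          · have h : max L 1 + |m| + (rT + r2) ≤ l := h
            have := le_max_left L 1
            have := abs_nonneg m
            rw [abs_lt] at hl
            omega
      · have h1 := le_max_right L 1
        have h2 := abs_nonneg m
        have h3 := le_abs_self m
        refine main 0 _ (by omega) t ht d hd m ?_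
        rcases hm with hm | hm
        · left; linarith
        · right; right
          refine ⟨by linarith, ?_⟩
          nlinarith)
  obtain ⟨⟨nR, hnR⟩, -⟩ := mortal_of (β (Set.Ici 0)) (-(rT + r2)) A (T + T')
    (fun t ht => ha _ t (by omega)) (by
      intro t ht d hd m hm
      refine s.beta_lim hzc hz hβ hη hi _ (closedC (d * z ^ m) t) (Set.Ici 0) fun L => ?_
      refine ⟨Set.Iic (-(max L 1 + |m| + (rT + r2))) ∪ Set.Ici 0, ?_, ?_⟩
      · intro l hl
        constructor
        · intro h; exact Or.inr h
        · rintro (h | h)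
          · have h : l ≤ -(max L 1 + |m| + (rT + r2)) := h
            have := le_max_left L 1
            have := abs_nonneg m
            rw [abs_lt] at hl
            omega
          · exact h
      · have h1 := le_max_right L 1
        have h2 := abs_nonneg m
        have h3 := neg_abs_le m
        refine main _ 0 (by omega) t ht d hd m ?_
        rcases hm with hm | hm
        · right; right
          refine ⟨?_, by linarith⟩
          nlinarith
        · right; left; linarith)
  set τ := max (max nL nR) T1 with hτ
  have hL := s.mort_mono hnL (show nL ≤ τ by omega)
  have hR := s.mort_mono hnR (show nR ≤ τ by omega)
  obtain ⟨M, hM, hloc'⟩ := s.beta_local hzc hz hβ hη τ D (Δ / 4) (by positivity)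
  refine ⟨M, hM, τ, ?_⟩
  have hLM : f^[τ] (β (Set.Iic M)) = x₀ := by
    rw [← s.beta_shift hβ hη (-M) (Set.Iic 0) (Set.Iic M) (by
      intro l; simp only [Set.mem_Iic]; omega), s.itereq, hL, s.fix]
  have hRM : f^[τ] (β (Set.Ici (-M))) = x₀ := by
    rw [← s.beta_shift hβ hη M (Set.Ici 0) (Set.Ici (-M)) (by
      intro l; simp only [Set.mem_Ici]; omega), s.itereq, hR, s.fix]
  apply s.exp
  intro g
  rw [s.fix]
  by_cases hcl : ∀ d ∈ D, ∀ m : ℤ, g ≠ d * z ^ m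
  · exact (ha _ τ (by omega) g hcl).trans (by linarith)
  · push Not at hcl
    obtain ⟨d, hd, m, rfl⟩ := hcl
    rcases le_total 0 m with hm | hm
    · have := hloc' d hd m (Set.Icc (-M) M) (Set.Iic M) (by
        intro l hl
        rw [abs_lt] at hl
        simp only [Set.mem_Icc, Set.mem_Iic, and_iff_right_iff_imp]
        intro _
        by_contra hcon
        push Not at hcon
        nlinarith)
      rw [hLM, s.fix] at this
      linarith
    · have := hloc' d hd m (Set.Icc (-M) M) (Set.Ici (-M)) (by
        intro l hl
        rw [abs_lt] at hl
        simp only [Set.mem_Icc, Set.mem_Ici, and_iff_left_iff_imp]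
        intro _
        by_contra hcon
        push Not at hcon
        nlinarith)
      rw [hRM, s.fix] at this
      linarith

end oneD

section step
variable {G X : Type} [Group G] [MetricSpace X] [CompactSpace X] [MulAction G X]
  {x₀ : X} {f : X → X} {Δ : ℝ} {z : G}

/-- Support of finite type. -/
def HomP (G : Type) {X : Type} [Group G] [MetricSpace X] [MulAction G X] (x₀ : X) (Δ : ℝ) (x : X) :
    Prop :=
  ∃ F : Finset G, ∀ g : G, g ∉ F → dist (g • x) x₀ ≤ Δ / 4

theorem HomP.smul {x : X} (h : HomP G x₀ Δ x) (g : G) : HomP G x₀ Δ (g • x) := by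
  classical
  obtain ⟨F, hF⟩ := h
  refine ⟨F * {g⁻¹}, fun k hk => ?_⟩
  rw [smul_smul]
  refine hF _ fun hmem => hk ?_
  have : k = (k * g) * g⁻¹ := by group
  rw [this]
  exact Finset.mul_mem_mul hmem (Finset.mem_singleton_self _)

/-- Periodic column-supported points die. -/
def PerMort (x₀ : X) (f : X → X) (Δ : ℝ) (z : G) : Prop :=
  ∀ i : ℤ, 1 ≤ i → ∀ x : X, z ^ i • x = x → ∀ F : Finset G,
    (∀ g, ¬ InB (Subgroup.zpowers (z ^ i)) F g → dist (g • x) x₀ ≤ Δ / 4) → ∃ n, f^[n] x = x₀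

theorem Sys.beta_univ (s : Sys G X x₀ f Δ) (ih : PerMort x₀ f Δ z)
    {x : X} {F N : Finset G} {i : ℤ} {η : ℝ} {β : Set ℤ → X}
    (hβ : Beta x₀ z x F N i η β) (hη : η ≤ Δ / 4) (hi : 1 ≤ i) :
    (∃ n, f^[n] (β Set.univ) = x₀) ∧
      ∃ K : Finset G, ∀ g, ¬ InB (Subgroup.zpowers (z ^ i)) K g →
        dist (g • β Set.univ) x₀ ≤ Δ / 4 := by
  classical
  have hp := s.pos
  have hsupp : ∀ g, ¬ InB (Subgroup.zpowers (z ^ i)) (N⁻¹ * F) g →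
        dist (g • β Set.univ) x₀ ≤ Δ / 4 := by
    intro g hg
    refine (hβ.b2 Set.univ g ?_).le.trans hη
    rintro l - ⟨n, hn, hm⟩
    refine hg ⟨n⁻¹ * (n * g * z ^ (-(i * l))), Finset.mul_mem_mul (Finset.inv_mem_inv hn) hm,
      z ^ (i * l), ?_, ?_⟩
    · rw [zpow_mul]
      exact Subgroup.zpow_mem_zpowers _ _
    · rw [zpow_neg]; group
  refine ⟨ih i hi _ ?_ _ hsupp, _, hsupp⟩
  have := s.beta_shift hβ (by linarith) 1 Set.univ Set.univ (by simp)
  simpa using this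

theorem Sys.lemC (s : Sys G X x₀ f Δ) (hzc : ∀ g : G, z * g = g * z)
    (hz : ¬ IsOfFinOrder z) (ih : PerMort x₀ f Δ z) :
    ∃ (R : Finset G) (T : ℕ), ∀ x : X, HomP G x₀ Δ x → ∀ g : G,
      (∀ a ∈ R, ∀ m : ℤ, dist ((a * z ^ m * g) • x) x₀ ≤ Δ / 4) →
      ∀ t ≥ T, dist (g • f^[t] x) x₀ ≤ Δ / 4 := by
  classical
  have hp := s.pos
  obtain ⟨R, T, hA⟩ := s.lemA (Subgroup.zpowers z)
  obtain ⟨N8, hN8⟩ := s.E1 (Δ / 8) (by positivity)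
  have key : ∀ x : X, HomP G x₀ Δ x →
      (∀ a ∈ N8 * R, ∀ m : ℤ, dist ((a * z ^ m) • x) x₀ ≤ Δ / 4) →
      ∀ t ≥ T, dist (f^[t] x) x₀ ≤ Δ / 4 := by
    rintro x ⟨F, hF⟩ hR t ht
    have hR8 : ∀ a ∈ R, ∀ m : ℤ, dist ((a * z ^ m) • x) x₀ < Δ / 8 := by
      intro a ha m
      refine hN8 _ _ fun n hn => ?_
      rw [smul_smul, s.fix, ← mul_assoc]
      exact (hR _ (Finset.mul_mem_mul hn ha) m).trans (by linarith)
    obtain ⟨ρ, hρ, hcont⟩ := Metric.continuous_iff.mp (s.iterc t) x (Δ / 8) (by positivity)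
    obtain ⟨N, I0, hI0⟩ := s.beta hzc hz x F hF (Δ / 8) (by positivity)
    obtain ⟨I1, hI1⟩ := s.beta_close hzc hz x F N ρ hρ
    set i := max (max I0 I1) 1 with hidef
    obtain ⟨β, hβ⟩ := hI0 i (by omega)
    have hclose := hI1 i (by omega) (Δ / 8) (by linarith) β hβ Set.univ (Set.mem_univ _)
    obtain ⟨hmort, K, hK⟩ := s.beta_univ ih hβ (by linarith) (by omega)
    have hfin := hA _ hmort ⟨K, fun g hg => hK g ?_⟩ ?_ t ht
    · have h2 := hcont _ hclose
      have := dist_triangle_left (f^[t] x) x₀ (f^[t] (β Set.univ))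
      linarith
    · rintro ⟨a, ha, b, hb, e⟩
      refine hg ⟨a, ha, b, ?_, e⟩
      have : Subgroup.zpowers (z ^ i) ≤ Subgroup.zpowers z := by
        rw [Subgroup.zpowers_le]; exact Subgroup.zpow_mem_zpowers _ _
      exact this hb
    · rintro g ⟨a, ha, b, ⟨m, rfl⟩, rfl⟩
      by_cases hn : ∃ l, NearZ z F N i l (a * z ^ m)
      · obtain ⟨l, hl⟩ := hn
        have h1 := hβ.b1 Set.univ l (Set.mem_univ _) (a * z ^ m)
          (fun l' _ hne hl' => hne (hβ.b3 _ _ _ hl' hl))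
        have h2 := hR8 a ha (m + -(i * l))
        rw [smul_smul, mul_assoc, ← zpow_add] at h1
        have := dist_triangle ((a * z ^ m) • β Set.univ) ((a * z ^ (m + -(i * l))) • x) x₀
        show dist ((a * z ^ m) • β Set.univ) x₀ ≤ Δ / 4
        linarith
      · push Not at hn
        have := hβ.b2 Set.univ (a * z ^ m) (fun l _ => hn l)
        show dist ((a * z ^ m) • β Set.univ) x₀ ≤ Δ / 4
        linarith
  refine ⟨N8 * R, T, fun x hx g hg t ht => ?_⟩
  have := key (g • x) (hx.smul g) (fun a ha m => by
    rw [smul_smul]; exact hg a ha m) t ht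
  rwa [s.itereq] at this

theorem Sys.lemC' (s : Sys G X x₀ f Δ) (hzc : ∀ g : G, z * g = g * z)
    (hz : ¬ IsOfFinOrder z) (ih : PerMort x₀ f Δ z) (D : Finset G) :
    ∃ (D' : Finset G) (T : ℕ), ∀ x : X, HomP G x₀ Δ x →
      (∀ g, (∀ d ∈ D, ∀ m : ℤ, g ≠ d * z ^ m) → dist (g • x) x₀ ≤ Δ / 4) →
      ∀ t ≥ T, ∀ g, (∀ d ∈ D', ∀ m : ℤ, g ≠ d * z ^ m) → dist (g • f^[t] x) x₀ ≤ Δ / 4 := by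
  classical
  obtain ⟨R, T, h⟩ := s.lemC hzc hz ih
  refine ⟨R⁻¹ * D, T, fun x hx hD t ht g hg => h x hx g (fun a ha m => hD _ ?_) t ht⟩
  intro d hd k e
  refine hg (a⁻¹ * d) (Finset.mul_mem_mul (Finset.inv_mem_inv ha) hd) (k - m) ?_
  have e' : z ^ m * (a * g) = d * z ^ k := by
    rw [← e, ← mul_assoc, zpow_central hzc]
  have : a * g = d * z ^ (k - m) := by
    rw [zpow_central hzc] at e'
    rw [sub_eq_add_neg, zpow_add, zpow_neg, ← mul_assoc, ← e']
    group
  rw [mul_assoc, ← this]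
  group

theorem Sys.density (s : Sys G X x₀ f Δ) (hzc : ∀ g : G, z * g = g * z)
    (hz : ¬ IsOfFinOrder z) (ih : PerMort x₀ f Δ z) (q : X) (hq : HomP G x₀ Δ q) (c : ℝ)
    (hc : 0 < c) : ∃ x, HomP G x₀ Δ x ∧ (∃ n, f^[n] x = x₀) ∧ dist x q < c := by
  classical
  have hp := s.pos
  obtain ⟨Fq, hFq⟩ := hq
  obtain ⟨N4, hN4⟩ := s.E1 (Δ / 8) (by positivity)
  have strict : ∀ (y : X) (F : Finset G), (∀ g, g ∉ F → dist (g • y) x₀ ≤ Δ / 4) →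
      ∀ g, g ∉ N4⁻¹ * F → dist (g • y) x₀ < Δ / 8 := by
    intro y F hF g hg
    refine hN4 _ _ fun n hn => ?_
    rw [smul_smul, s.fix]
    refine (hF _ fun hmem => hg ?_).trans (by linarith)
    have : g = n⁻¹ * (n * g) := by group
    rw [this]
    exact Finset.mul_mem_mul (Finset.inv_mem_inv hn) hmem
  set D := N4⁻¹ * Fq with hD
  obtain ⟨D', TC, hTC⟩ := s.lemC' hzc hz ih D
  obtain ⟨Nf, hNf⟩ := s.E2 1 (Δ / 4) (by positivity)
  obtain ⟨r, hr, hcol⟩ := col_bdd hz Nf D'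
  obtain ⟨b, ⟨hbhom, hbD, hbq⟩, ρ, hρ, n0, hn0⟩ := s.baire
    {x | HomP G x₀ Δ x ∧ (∀ g, (∀ d ∈ D, ∀ m : ℤ, g ≠ d * z ^ m) → dist (g • x) x₀ < Δ / 4) ∧
      dist x q < c}
    ⟨q, ⟨Fq, hFq⟩, fun g hg => (strict q Fq hFq g fun hmem => hg g hmem 0 (by simp)).trans
      (by linarith), by simpa using hc⟩
    (D' * (Finset.Icc 0 r).image (fun m : ℤ => z ^ m)) (Δ / 4) (by positivity)
  obtain ⟨Fb, hFb⟩ := hbhom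
  obtain ⟨θ, hθ0, hθ8, hθ⟩ : ∃ θ : ℝ, 0 < θ ∧ θ ≤ Δ / 8 ∧ ∀ g, (∀ d ∈ D, ∀ m : ℤ, g ≠ d * z ^ m) →
      dist (g • b) x₀ + θ ≤ Δ / 4 := by
    have hev : ∀ᶠ θ in 𝓝[>] (0 : ℝ), ∀ g ∈ N4⁻¹ * Fb, (∀ d ∈ D, ∀ m : ℤ, g ≠ d * z ^ m) →
        dist (g • b) x₀ + θ ≤ Δ / 4 := by
      rw [Filter.eventually_all_finset]
      intro g _
      by_cases hg : ∀ d ∈ D, ∀ m : ℤ, g ≠ d * z ^ m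
      · have h1 := hbD g hg
        have : ∀ᶠ θ in 𝓝[>] (0 : ℝ), θ < Δ / 4 - dist (g • b) x₀ :=
          nhdsWithin_le_nhds (Iio_mem_nhds (by linarith))
        filter_upwards [this] with θ hθ _
        linarith
      · exact Eventually.of_forall fun θ h => absurd h hg
    have hev2 : ∀ᶠ θ in 𝓝[>] (0 : ℝ), θ < Δ / 8 :=
      nhdsWithin_le_nhds (Iio_mem_nhds (by positivity))
    have hev3 : ∀ᶠ θ in 𝓝[>] (0 : ℝ), 0 < θ := eventually_mem_nhdsWithin
    obtain ⟨θ, h1, h2, h3⟩ := (hev.and (hev2.and hev3)).exists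
    refine ⟨θ, h3, h2.le, fun g hg => ?_⟩
    by_cases hmem : g ∈ N4⁻¹ * Fb
    · exact h1 g hmem hg
    · have := strict b Fb hFb g hmem
      linarith
  obtain ⟨N, I0, hI0⟩ := s.beta hzc hz b Fb hFb θ hθ0
  obtain ⟨I1, hI1⟩ := s.beta_close hzc hz b Fb N (min ρ (c - dist b q)) (lt_min hρ (by linarith))
  set i := max (max I0 I1) 1 with hidef
  have hi : 1 ≤ i := by omega
  obtain ⟨β, hβ⟩ := hI0 i (by omega)
  have hclose := hI1 i (by omega) θ (by linarith) β hβ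
  have hη : 2 * θ ≤ Δ := by linarith
  have F1 : ∀ S g, (∀ d ∈ D, ∀ m : ℤ, g ≠ d * z ^ m) → dist (g • β S) x₀ < Δ / 4 := by
    intro S g hg
    by_cases hn : ∃ l ∈ S, NearZ z Fb N i l g
    · obtain ⟨l, hlS, hl⟩ := hn
      have h1 := hβ.b1 S l hlS g (fun l' _ hne hl' => hne (hβ.b3 _ _ _ hl' hl))
      have h2 := hθ (g * z ^ (-(i * l))) (by
        intro d hd m e
        refine hg d hd (m + i * l) ?_
        rw [zpow_add, ← mul_assoc, ← e, zpow_neg]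
        group)
      rw [smul_smul] at h1
      have := dist_triangle (g • β S) ((g * z ^ (-(i * l))) • b) x₀
      linarith
    · push Not at hn
      have := hβ.b2 S g hn
      linarith
  have F2 : ∀ S : Set ℤ, 0 ∈ S → dist (β S) b < ρ ∧ dist (β S) q < c := by
    intro S hS
    have h1 := hclose S hS
    have h2 := min_le_left ρ (c - dist b q)
    have h3 := min_le_right ρ (c - dist b q)
    have := dist_triangle (β S) b q
    exact ⟨by linarith, by linarith⟩
  have hfinhom : ∀ S : Set ℤ, S.Finite → HomP G x₀ Δ (β S) := by
    intro S hS
    have := s.beta_hom hzc hβ (by linarith) hS.toFinset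
    rw [Set.Finite.coe_toFinset] at this
    exact this
  have closedC : ∀ (g : G) (t : ℕ), IsClosed {y : X | dist (g • f^[t] y) x₀ ≤ Δ / 4} := fun g t =>
    isClosed_le (((s.cont g).comp (s.iterc t)).dist continuous_const) continuous_const
  have hcut : ∀ (S : Set ℤ) (L : ℤ), (S ∩ {l | |l| < L}).Finite := by
    intro S L
    refine (Set.finite_Icc (-L) L).subset ?_
    rintro l ⟨-, hl⟩
    have hl : |l| < L := hl
    rw [abs_lt] at hl
    exact ⟨hl.1.le, hl.2.le⟩
  have F3 : ∀ S : Set ℤ, 0 ∈ S → ∀ t ≥ n0, ∀ d ∈ D', ∀ m : ℤ, 0 ≤ m → m ≤ r →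
      dist ((d * z ^ m) • f^[t] (β S)) x₀ ≤ Δ / 4 := by
    intro S hS t ht d hd m hm hm'
    refine s.beta_lim hzc hz hβ hη hi _ (closedC (d * z ^ m) t) S fun L => ?_
    refine ⟨S ∩ {l | |l| < max L 1}, ?_, ?_⟩
    · intro l hl
      constructor
      · exact fun h => ⟨h, lt_of_lt_of_le hl (le_max_left _ _)⟩
      · exact fun h => h.1
    · have h0 : (0 : ℤ) ∈ S ∩ {l | |l| < max L 1} := ⟨hS, by
        show |(0 : ℤ)| < max L 1
        simp⟩
      exact hn0 _ ⟨hfinhom _ (hcut _ _), F1 _, (F2 _ h0).2⟩ (F2 _ h0).1 t ht _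
        (Finset.mul_mem_mul hd (Finset.mem_image_of_mem _ (Finset.mem_Icc.mpr ⟨hm, hm'⟩)))
  obtain ⟨M, hM, n, hn⟩ := s.oneD hzc hz hβ hη hθ0 hi D' r hr (max TC n0) (by
      intro S t ht g hg
      refine s.beta_lim hzc hz hβ hη hi _ (closedC g t) S fun L => ?_
      refine ⟨S ∩ {l | |l| < L}, fun l hl => ⟨fun h => ⟨h, hl⟩, fun h => h.1⟩, ?_⟩
      exact hTC _ (hfinhom _ (hcut _ _)) (fun g hg => (F1 _ g hg).le) t
        ((le_max_left _ _).trans ht) g hg) (by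
      intro S j hj t ht d hd m hm hm'
      have h1 := s.beta_shift hβ hη j S {l | l + j ∈ S} (fun l => Iff.rfl)
      have h2 := F3 {l | l + j ∈ S} (by
        show 0 + j ∈ S
        rwa [zero_add]) t ((le_max_right _ _).trans ht) d hd (m - i * j) (by linarith)
        (by linarith)
      rw [← h1, s.itereq, smul_smul, mul_assoc, ← zpow_add, sub_add_cancel] at h2
      exact h2) (by
      intro y hy d hd m hm
      have := hNf y x₀ (d * z ^ m) (by
        intro n hn
        rw [s.fix]
        by_cases hcl : ∀ d' ∈ D', ∀ m' : ℤ, n * (d * z ^ m) ≠ d' * z ^ m'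
        · exact (hy _ hcl).trans (by linarith)
        · push Not at hcl
          obtain ⟨d', hd', m', e⟩ := hcl
          rw [e]
          exact (hm d' hd' m' (hcol n hn d hd d' hd' m m' e)).trans (by linarith))
      rw [s.iter0, s.fix] at this
      exact this.le) (s.beta_univ ih hβ (by linarith) hi).1
  exact ⟨_, hfinhom _ (Set.finite_Icc _ _), ⟨n, hn⟩,
    (F2 _ (by simp only [Set.mem_Icc]; omega)).2⟩

/-- zero blocking for limits of mortal homoclinic points. -/
theorem Sys.block (s : Sys G X x₀ f Δ) : ∃ (R : Finset G) (T : ℕ), ∀ x : X,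
    (∀ c > 0, ∃ y, HomP G x₀ Δ y ∧ (∃ n, f^[n] y = x₀) ∧ dist y x < c) →
    ∀ g : G, (∀ a ∈ R, dist ((a * g) • x) x₀ < Δ / 4) → ∀ t ≥ T, dist (g • f^[t] x) x₀ ≤ Δ / 8 := by
  classical
  obtain ⟨R, T, h⟩ := s.lemA_bot
  refine ⟨R, T, fun x hx g hg t ht => ?_⟩
  have hO : IsOpen {y : X | ∀ a ∈ R, dist ((a * g) • y) x₀ < Δ / 4} := by
    have : {y : X | ∀ a ∈ R, dist ((a * g) • y) x₀ < Δ / 4} =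
        ⋂ a ∈ R, {y : X | dist ((a * g) • y) x₀ < Δ / 4} := by
      ext y; simp
    rw [this]
    exact isOpen_biInter_finset fun a _ =>
      isOpen_lt ((s.cont _).dist continuous_const) continuous_const
  obtain ⟨ε, hε, hball⟩ := Metric.isOpen_iff.mp hO x hg
  have hC : IsClosed {y : X | dist (g • f^[t] y) x₀ ≤ Δ / 8} :=
    isClosed_le (((s.cont g).comp (s.iterc t)).dist continuous_const) continuous_const
  show x ∈ {y : X | dist (g • f^[t] y) x₀ ≤ Δ / 8}
  rw [← hC.closure_eq, Metric.mem_closure_iff]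
  intro c hc
  obtain ⟨y, hy, ⟨n, hn⟩, hyx⟩ := hx (min c ε) (lt_min hc hε)
  refine ⟨y, ?_, by rw [dist_comm]; exact hyx.trans_le (min_le_left _ _)⟩
  have h1 : y ∈ {y : X | ∀ a ∈ R, dist ((a * g) • y) x₀ < Δ / 4} :=
    hball (hyx.trans_le (min_le_right _ _))
  have := h (g • y) ⟨n, by rw [s.itereq, hn, s.fix]⟩ (hy.smul g) (by
    intro a ha
    rw [smul_smul]
    exact (h1 a ha).le) t ht
  rw [s.itereq] at this
  exact this

theorem Sys.step (s : Sys G X x₀ f Δ) (hzc : ∀ g : G, z * g = g * z)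
    (hz : ¬ IsOfFinOrder z) (ih : PerMort x₀ f Δ z) (x : X) (hx : HomP G x₀ Δ x) :
    ∃ n, f^[n] x = x₀ := by
  classical
  have hp := s.pos
  obtain ⟨R, T, h⟩ := s.block
  have hd := h x (fun c hc => s.density hzc hz ih x hx c hc)
  obtain ⟨N, hN⟩ := s.E1 (Δ / 4) (by positivity)
  obtain ⟨F, hF⟩ := hx
  refine s.mort (R⁻¹ * (N⁻¹ * F)) T fun t ht g hg => (hd g ?_ t ht).trans (by linarith)
  intro a ha
  refine hN _ _ fun n hn => ?_
  rw [smul_smul, s.fix]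
  refine (hF _ fun hmem => hg ?_).trans (by linarith)
  have : g = a⁻¹ * (n⁻¹ * (n * (a * g))) := by group
  rw [this]
  exact Finset.mul_mem_mul (Finset.inv_mem_inv ha) (Finset.mul_mem_mul (Finset.inv_mem_inv hn) hmem)

end step

open scoped commutatorElement
/-- All points of finite type are mortal, for all systems over `G`. -/
def HM (G : Type) [Group G] : Prop :=
  ∀ (X : Type) [MetricSpace X] [CompactSpace X] [MulAction G X] (x₀ : X) (f : X → X) (Δ : ℝ),
    Sys G X x₀ f Δ → ∀ x, HomP G x₀ Δ x → ∃ n, f^[n] x = x₀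

theorem HM_finite (G : Type) [Group G] [Finite G] : HM G := by
  intro X _ _ _ x₀ f Δ s x _
  have := Fintype.ofFinite G
  exact s.mort Finset.univ 0 (fun t _ g hg => absurd (Finset.mem_univ g) hg)

section quot
variable {Q P X : Type} [Group Q] [Group P] [MetricSpace X] [MulAction Q X]

/-- points fixed by the kernel. -/
abbrev FixK (X : Type) [MulAction Q X] (π : Q →* P) : Type :=
  {x : X // ∀ k : Q, π k = 1 → k • x = x}

theorem FixK_smul_eq (π : Q →* P) (y : FixK X π) (q q' : Q) (h : π q = π q') :
    q • y.1 = q' • y.1 := by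
  have := y.2 (q'⁻¹ * q) (by rw [map_mul, map_inv, h, inv_mul_cancel])
  calc q • y.1 = q' • ((q'⁻¹ * q) • y.1) := by rw [smul_smul]; group
    _ = q' • y.1 := by rw [this]

theorem FixK_smul_mem (π : Q →* P) (y : FixK X π) (q k : Q) (hk : π k = 1) :
    k • (q • y.1) = q • y.1 := by
  rw [smul_smul]
  exact FixK_smul_eq π y _ _ (by rw [map_mul, hk, one_mul])

theorem FixK_compact [CompactSpace X] (π : Q →* P) (cont : ∀ g : Q, Continuous fun x : X => g • x) :
    CompactSpace (FixK X π) := by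
  have : IsClosed {x : X | ∀ k : Q, π k = 1 → k • x = x} := by
    have e : {x : X | ∀ k : Q, π k = 1 → k • x = x} =
        ⋂ k : Q, ⋂ (_ : π k = 1), {x : X | k • x = x} := by
      ext x; simp
    rw [e]
    exact isClosed_iInter fun k => isClosed_iInter fun _ => isClosed_eq (cont k) continuous_id
  exact isCompact_iff_compactSpace.mp this.isCompact

/-- the induced action -/
@[reducible] noncomputable def FixKAction (π : Q →* P) (hπ : Function.Surjective π) :
    MulAction P (FixK X π) where
  smul p y := ⟨Function.surjInv hπ p • y.1, fun k hk => FixK_smul_mem π y _ k hk⟩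
  one_smul y := by
    apply Subtype.ext
    show Function.surjInv hπ 1 • y.1 = y.1
    rw [FixK_smul_eq π y _ 1 (by rw [Function.surjInv_eq hπ, map_one]), one_smul]
  mul_smul p p' y := by
    apply Subtype.ext
    show Function.surjInv hπ (p * p') • y.1 =
      Function.surjInv hπ p • Function.surjInv hπ p' • y.1
    rw [smul_smul]
    exact FixK_smul_eq π y _ _ (by
      rw [map_mul, Function.surjInv_eq hπ, Function.surjInv_eq hπ, Function.surjInv_eq hπ])

theorem HM_quot [CompactSpace X] (π : Q →* P) (hπ : Function.Surjective π) (hP : HM P)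
    {x₀ : X} {f : X → X} {Δ : ℝ} (s : Sys Q X x₀ f Δ) (x : X)
    (hx : ∀ k : Q, π k = 1 → k • x = x) (F : Finset Q)
    (hF : ∀ g, (∀ a ∈ F, π g ≠ π a) → dist (g • x) x₀ ≤ Δ / 4) : ∃ n, f^[n] x = x₀ := by
  classical
  have hp := s.pos
  have := FixK_compact (X := X) π s.cont
  let _ : MulAction P (FixK X π) := FixKAction π hπ
  have hact : ∀ (q : Q) (y : FixK X π), (π q • y).1 = q • y.1 := by
    intro q y
    show Function.surjInv hπ (π q) • y.1 = q • y.1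
    exact FixK_smul_eq π y _ _ (by rw [Function.surjInv_eq hπ])
  let y₀ : FixK X π := ⟨x₀, fun k _ => s.fix k⟩
  let F' : FixK X π → FixK X π := fun y => ⟨f y.1, fun k hk => by rw [← s.feq, y.2 k hk]⟩
  have hiter : ∀ (n : ℕ) (y : FixK X π), (F'^[n] y).1 = f^[n] y.1 := by
    intro n
    induction n with
    | zero => intro y; rfl
    | succ n ih => intro y; rw [Function.iterate_succ_apply, Function.iterate_succ_apply, ih]
  have hdist : ∀ y y' : FixK X π, dist y y' = dist y.1 y'.1 := fun _ _ => rfl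
  have hcval : Continuous (fun y : FixK X π => y.1) := continuous_subtype_val
  have cont : ∀ g : P, Continuous fun y : FixK X π => g • y := by
    intro g
    obtain ⟨q, rfl⟩ := hπ g
    refine Continuous.subtype_mk (p := fun x : X => ∀ k : Q, π k = 1 → k • x = x)
      (f := fun y : FixK X π => (π q • y).1) ?_ (fun y => (π q • y).2)
    simp only [hact]
    exact (s.cont q).comp hcval
  have fix : ∀ g : P, g • y₀ = y₀ := by
    intro g
    obtain ⟨q, rfl⟩ := hπ g
    apply Subtype.ext
    rw [hact]
    exact s.fix q
  have exp : ∀ y y' : FixK X π, (∀ g : P, dist (g • y) (g • y') ≤ Δ) → y = y' := by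
    intro y y' h
    apply Subtype.ext
    apply s.exp
    intro g
    have := h (π g)
    rwa [hdist, hact, hact] at this
  have hg0 : ∃ N : Finset P, Glues y₀ Δ (Δ / 4) N := by
    obtain ⟨N, hN⟩ := s.glue (Δ / 4) (by positivity)
    refine ⟨N.image π, ?_⟩
    intro I S p h1 h2
    have hhit : ∀ i g, Hit N (π ⁻¹' S i) g ↔ Hit (N.image π) (S i) (π g) := by
      intro i g
      constructor
      · rintro ⟨n, hn, h⟩
        exact ⟨π n, Finset.mem_image_of_mem _ hn, by rw [← map_mul]; exact h⟩
      · rintro ⟨n, hn, h⟩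
        obtain ⟨n, hn', rfl⟩ := Finset.mem_image.mp hn
        refine ⟨n, hn', ?_⟩
        show π (n * g) ∈ S i
        rwa [map_mul]
    obtain ⟨y, y1, y2⟩ := hN I (fun i => π ⁻¹' S i) (fun i => (p i).1) (by
      intro i g hg
      have := h1 i (π g) hg
      rwa [hdist, hact] at this) (by
      intro i j hij g
      rw [hhit, hhit]
      exact h2 i j hij _)
    simp only [hhit] at y1 y2
    have hy : ∀ k : Q, π k = 1 → k • y = y := by
      intro k hk
      apply s.exp
      intro g
      rw [smul_smul]
      have e : π (g * k) = π g := by rw [map_mul, hk, mul_one]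
      by_cases hi : ∃ i, Hit (N.image π) (S i) (π g)
      · obtain ⟨i, hi⟩ := hi
        have a := y1 i g (fun j hj hh => h2 j i hj _ hh hi)
        have b := y1 i (g * k) (fun j hj hh => h2 j i hj _ hh (by rwa [e]))
        rw [FixK_smul_eq π (p i) _ _ e] at b
        have := dist_triangle_right ((g * k) • y) (g • y) (g • (p i).1)
        linarith
      · push Not at hi
        have a := y2 g hi
        have b := y2 (g * k) (by rwa [e])
        have := dist_triangle_right ((g * k) • y) (g • y) x₀
        linarith
    refine ⟨⟨y, hy⟩, ?_, ?_⟩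
    · intro i g hg
      obtain ⟨q, rfl⟩ := hπ g
      rw [hdist, hact, hact]
      exact y1 i q hg
    · intro g hg
      obtain ⟨q, rfl⟩ := hπ g
      rw [hdist, hact]
      exact y2 q hg
  obtain ⟨N0, hN0⟩ := hg0
  have sys : Sys P (FixK X π) y₀ F' Δ :=
    { cont := cont
      fix := fix
      pos := hp
      exp := exp
      glue := fun η hη => glue_all cont fix exp (by linarith) hN0 η hη
      fc := Continuous.subtype_mk (s.fc.comp hcval) _
      f0 := Subtype.ext s.f0
      feq := by
        intro g y
        obtain ⟨q, rfl⟩ := hπ g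
        apply Subtype.ext
        rw [hact]
        show f (π q • y).1 = q • f y.1
        rw [hact, s.feq]
      AN := by
        intro y
        refine tendsto_subtype_rng.mpr ?_
        have := s.AN y.1
        simp only [← hiter] at this
        exact this }
  obtain ⟨n, hn⟩ := hP _ y₀ F' Δ sys ⟨x, hx⟩ ⟨F.image π, by
    intro g hg
    obtain ⟨q, rfl⟩ := hπ g
    rw [hdist, hact]
    exact hF q fun a ha e => hg (e ▸ Finset.mem_image_of_mem _ ha)⟩
  exact ⟨n, by rw [← hiter n ⟨x, hx⟩, hn]⟩

theorem HM_step {z : Q} (hzc : ∀ g : Q, z * g = g * z) (hz : ¬ IsOfFinOrder z)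
    (h : ∀ i : ℤ, 1 ≤ i → ∃ (P : Type) (_ : Group P) (π : Q →* P), Function.Surjective π ∧
      π.ker = Subgroup.zpowers (z ^ i) ∧ HM P) : HM Q := by
  intro X _ _ _ x₀ f Δ s
  refine s.step hzc hz ?_
  intro i hi x hx F hF
  obtain ⟨P, _, π, hπ, hker, hP⟩ := h i hi
  refine HM_quot π hπ hP s x ?_ F ?_
  · intro k hk
    rw [← MonoidHom.mem_ker, hker] at hk
    have hle : Subgroup.zpowers (z ^ i) ≤ MulAction.stabilizer Q x := by
      rw [Subgroup.zpowers_le]; exact hx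
    exact hle hk
  · intro g hg
    refine hF g ?_
    rintro ⟨a, ha, b, hb, rfl⟩
    refine hg a ha ?_
    rw [← hker, MonoidHom.mem_ker] at hb
    rw [map_mul, hb, mul_one]

end quot

section good
variable {G : Type} [Group G]

def GoodN : ℕ → Subgroup G → Prop
  | 0, K => K.Normal ∧ K.FiniteIndex
  | n + 1, K => K.Normal ∧ ∃ z : G, (∀ g, ⁅z, g⁆ ∈ K) ∧
      ∀ i : ℤ, 1 ≤ i → GoodN n (K ⊔ Subgroup.zpowers (z ^ i))

theorem GoodN.normal {n : ℕ} {K : Subgroup G} (h : GoodN n K) : K.Normal := by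
  cases n with
  | zero => exact h.1
  | succ n => exact h.1

theorem GoodN.hm : ∀ (n : ℕ) (K : Subgroup G), GoodN n K → ∀ (Q : Type) [Group Q] (φ : G →* Q),
    Function.Surjective φ → φ.ker = K → HM Q := by
  intro n
  induction n with
  | zero =>
    intro K hK Q _ φ hφ hker
    have : φ.ker.FiniteIndex := by rw [hker]; exact hK.2
    have : Finite (G ⧸ φ.ker) := Subgroup.finite_quotient_of_finiteIndex
    have : Finite Q := Finite.of_equiv _ (QuotientGroup.quotientKerEquivOfSurjective φ hφ).toEquiv
    exact HM_finite Q
  | succ n ih =>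
    intro K hK Q _ φ hφ hker
    obtain ⟨hn, z, hz, hi⟩ := hK
    by_cases hfin : IsOfFinOrder (φ z)
    · obtain ⟨k, hk, hk'⟩ := isOfFinOrder_iff_pow_eq_one.mp hfin
      have hmem : z ^ (k : ℤ) ∈ K := by
        rw [← hker, MonoidHom.mem_ker, zpow_natCast, map_pow, hk']
      have := hi k (by omega)
      have e : K ⊔ Subgroup.zpowers (z ^ (k : ℤ)) = K := by
        rw [sup_eq_left, Subgroup.zpowers_le]; exact hmem
      rw [e] at this
      exact ih K this Q φ hφ hker
    · refine HM_step (z := φ z) ?_ hfin ?_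
      · intro g
        obtain ⟨g, rfl⟩ := hφ g
        have := hz g
        rw [← hker, MonoidHom.mem_ker, map_commutatorElement] at this
        exact commutatorElement_eq_one_iff_mul_comm.mp this
      · intro i hi1
        have hL := hi i hi1
        set L := K ⊔ Subgroup.zpowers (z ^ i) with hLdef
        have hLn : L.Normal := hL.normal
        have hle : φ.ker ≤ (QuotientGroup.mk' L).ker := by
          rw [QuotientGroup.ker_mk', hker]; exact le_sup_left
        let π : Q →* G ⧸ L := φ.liftOfSurjective hφ ⟨QuotientGroup.mk' L, hle⟩
        have hπ : ∀ g, π (φ g) = QuotientGroup.mk' L g := fun g =>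
          MonoidHom.liftOfRightInverse_comp_apply φ _ _ ⟨QuotientGroup.mk' L, hle⟩ g
        refine ⟨G ⧸ L, inferInstance, π, ?_, ?_, ?_⟩
        · intro p
          obtain ⟨g, rfl⟩ := QuotientGroup.mk'_surjective L p
          exact ⟨φ g, hπ g⟩
        · have e1 : π.ker = L.map φ := by
            ext q
            obtain ⟨g, rfl⟩ := hφ q
            rw [MonoidHom.mem_ker, hπ, ← MonoidHom.mem_ker, QuotientGroup.ker_mk']
            constructor
            · exact fun h => Subgroup.mem_map_of_mem φ h
            · rintro ⟨g', hg', e⟩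
              have : g'⁻¹ * g ∈ φ.ker := by
                rw [MonoidHom.mem_ker, map_mul, map_inv, e, inv_mul_cancel]
              rw [hker] at this
              have h2 := L.mul_mem hg' ((le_sup_left : K ≤ L) this)
              rwa [mul_inv_cancel_left] at h2
          rw [e1, hLdef, Subgroup.map_sup, MonoidHom.map_zpowers, map_zpow]
          have : K.map φ = ⊥ := by
            rw [Subgroup.map_eq_bot_iff, hker]
          rw [this, bot_sup_eq]
        · exact ih L hL (G ⧸ L) (QuotientGroup.mk' L) (QuotientGroup.mk'_surjective L)
            (QuotientGroup.ker_mk' L)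

end good

section alg
variable {G : Type} [Group G]

/-- the preimage of the centre of `G ⧸ K`. -/
def ZK (K : Subgroup G) [K.Normal] : Subgroup G :=
  (Subgroup.center (G ⧸ K)).comap (QuotientGroup.mk' K)

theorem comm_mem_iff (K : Subgroup G) [K.Normal] (a b : G) :
    ⁅a, b⁆ ∈ K ↔ Commute (QuotientGroup.mk' K a) (QuotientGroup.mk' K b) := by
  rw [← commutatorElement_eq_one_iff_commute, ← map_commutatorElement, ← MonoidHom.mem_ker,
    QuotientGroup.ker_mk']

theorem mem_ZK (K : Subgroup G) [K.Normal] (m : G) : m ∈ ZK K ↔ ∀ g, ⁅m, g⁆ ∈ K := by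
  simp only [comm_mem_iff]
  rw [ZK, Subgroup.mem_comap, Subgroup.mem_center_iff]
  constructor
  · intro h g
    exact (h _).symm
  · intro h g
    obtain ⟨g, rfl⟩ := QuotientGroup.mk'_surjective K g
    exact (h g).symm

theorem le_ZK (K : Subgroup G) [K.Normal] : K ≤ ZK K := by
  intro k hk
  rw [mem_ZK]
  intro g
  rw [commutatorElement_def, mul_assoc, mul_assoc]
  refine K.mul_mem hk ?_
  rw [← mul_assoc]
  exact Subgroup.Normal.conj_mem inferInstance _ (K.inv_mem hk) g

theorem ZK_mono {K L : Subgroup G} [K.Normal] [L.Normal] (h : K ≤ L) : ZK K ≤ ZK L := by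
  intro m hm
  rw [mem_ZK] at hm ⊢
  exact fun g => h (hm g)

theorem normal_of_le_ZK {K M : Subgroup G} [K.Normal] (h1 : K ≤ M) (h2 : M ≤ ZK K) : M.Normal := by
  constructor
  intro m hm g
  have h3 := (mem_ZK K m).mp (h2 hm) g
  have : g * m * g⁻¹ = ⁅m, g⁆⁻¹ * m := by
    rw [commutatorElement_def]; group
  rw [this]
  exact M.mul_mem (M.inv_mem (h1 h3)) hm

theorem relIndex_ne_zero_of_cover {K L : Subgroup G} (C : Finset G)
    (h : ∀ x ∈ L, ∃ c ∈ C, c ∈ L ∧ c⁻¹ * x ∈ K) : K.relIndex L ≠ 0 := by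
  have hfin : Finite (L ⧸ K.subgroupOf L) := by
    refine Finite.of_surjective (α := {c : C // c.1 ∈ L})
      (fun c => QuotientGroup.mk (s := K.subgroupOf L) ⟨c.1.1, c.2⟩) ?_
    intro q
    obtain ⟨x, rfl⟩ := QuotientGroup.mk_surjective q
    obtain ⟨c, hc, hcL, hcx⟩ := h x.1 x.2
    refine ⟨⟨⟨c, hc⟩, hcL⟩, ?_⟩
    rw [QuotientGroup.eq, Subgroup.mem_subgroupOf]
    exact hcx
  exact Subgroup.index_ne_zero_of_finite

theorem relIndex_zpowers (z : G) (i : ℤ) (hi : 1 ≤ i) :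
    (Subgroup.zpowers (z ^ i)).relIndex (Subgroup.zpowers z) ≠ 0 := by
  classical
  refine relIndex_ne_zero_of_cover ((Finset.Icc 0 i).image (fun m : ℤ => z ^ m)) ?_
  rintro x ⟨m, rfl⟩
  refine ⟨z ^ (m % i), ?_, Subgroup.zpow_mem_zpowers _ _, ⟨m / i, ?_⟩⟩
  · refine Finset.mem_image_of_mem _ (Finset.mem_Icc.mpr ⟨Int.emod_nonneg _ (by omega), ?_⟩)
    exact (Int.emod_lt_of_pos m (by omega)).le
  · show (z ^ i) ^ (m / i) = (z ^ (m % i))⁻¹ * z ^ m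
    rw [← zpow_mul, ← zpow_neg, ← zpow_add]
    congr 1
    have := Int.emod_add_mul_ediv m i
    linarith

theorem commutator_pow_aux {H : Type} [Group H] (z g : H) (e : ℕ) (h : Commute ⁅z, g⁆ z) :
    ⁅z ^ e, g⁆ = ⁅z, g⁆ ^ e := by
  induction e with
  | zero => simp
  | succ e ih =>
    have h1 : ⁅z ^ (e + 1), g⁆ = z * ⁅z ^ e, g⁆ * z⁻¹ * ⁅z, g⁆ := by
      simp only [commutatorElement_def, pow_succ']
      group
    rw [h1, ih, pow_succ, ← (h.pow_left e).eq]
    group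

theorem GoodN.descend : ∀ (n : ℕ) (K L : Subgroup G) [K.Normal], K ≤ L → K.relIndex L ≠ 0 →
    L ≤ ZK K → GoodN n L → GoodN n K := by
  intro n
  induction n with
  | zero =>
    intro K L hK hKL hrel _ hL
    refine ⟨hK, ⟨?_⟩⟩
    rw [← Subgroup.relIndex_mul_index hKL]
    exact mul_ne_zero hrel hL.2.index_ne_zero
  | succ n ih =>
    intro K L hK hKL hrel hZ hL
    obtain ⟨hLn, z, hz, hi⟩ := hL
    set e := K.relIndex L with he
    have hpow : ∀ x ∈ L, x ^ e ∈ K := by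
      intro x hx
      have := Subgroup.pow_index_mem (K.subgroupOf L) ⟨x, hx⟩
      rw [Subgroup.mem_subgroupOf] at this
      exact this
    have hw : z ^ e ∈ ZK K := by
      rw [mem_ZK]
      intro g
      have h1 : ⁅⁅z, g⁆, z⁆ ∈ K := (mem_ZK K _).mp (hZ (hz g)) z
      rw [comm_mem_iff, map_commutatorElement] at h1
      have h2 := commutator_pow_aux _ _ e h1
      rw [← map_pow, ← map_commutatorElement, ← map_commutatorElement, ← map_pow] at h2
      have h3 := hpow _ (hz g)
      rw [← QuotientGroup.ker_mk' K, MonoidHom.mem_ker] at h3 ⊢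
      rw [h2, h3]
    refine ⟨hK, z ^ e, (mem_ZK K _).mp hw, ?_⟩
    intro i hi1
    have hpos : (1 : ℤ) ≤ e * i := by
      have : 0 < e := Nat.pos_of_ne_zero hrel
      have h1 : (1 : ℤ) ≤ e := by exact_mod_cast this
      nlinarith
    have hg := hi (e * i) hpos
    have hzw : (z ^ e) ^ i = z ^ ((e : ℤ) * i) := by rw [zpow_mul, zpow_natCast]
    rw [hzw]
    set w := z ^ ((e : ℤ) * i) with hwdef
    have hwZ : w ∈ ZK K := by rw [← hzw]; exact (ZK K).zpow_mem hw i
    have hle : K ⊔ Subgroup.zpowers w ≤ ZK K := sup_le (le_ZK K) (by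
      rw [Subgroup.zpowers_le]; exact hwZ)
    have hN : (K ⊔ Subgroup.zpowers w).Normal := normal_of_le_ZK le_sup_left hle
    refine ih _ (L ⊔ Subgroup.zpowers w) (sup_le_sup_right hKL _) ?_ ?_ hg
    · have : L ⊔ Subgroup.zpowers w = L ⊔ (K ⊔ Subgroup.zpowers w) := by
        rw [← sup_assoc, sup_eq_left.mpr hKL]
      rw [this, Subgroup.relIndex_sup_right]
      exact fun h0 => hrel (Subgroup.relIndex_eq_zero_of_le_left le_sup_left h0)
    · have hm := ZK_mono (le_sup_left : K ≤ K ⊔ Subgroup.zpowers w)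
      exact sup_le (hZ.trans hm) (le_sup_right.trans (hle.trans hm))

theorem GoodN.add_one (n : ℕ) (K : Subgroup G) [hK : K.Normal] (z : G) (hz : z ∈ ZK K)
    (h : GoodN n (K ⊔ Subgroup.zpowers z)) : GoodN (n + 1) K := by
  refine ⟨hK, z, (mem_ZK K z).mp hz, fun i hi => ?_⟩
  have hle : K ⊔ Subgroup.zpowers (z ^ i) ≤ ZK K := sup_le (le_ZK K) (by
      rw [Subgroup.zpowers_le]; exact (ZK K).zpow_mem hz i)
  have hle' : K ⊔ Subgroup.zpowers z ≤ ZK K := sup_le (le_ZK K) (by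
      rw [Subgroup.zpowers_le]; exact hz)
  have hN : (K ⊔ Subgroup.zpowers (z ^ i)).Normal := normal_of_le_ZK le_sup_left hle
  have hzz : Subgroup.zpowers (z ^ i) ≤ Subgroup.zpowers z := by
    rw [Subgroup.zpowers_le]; exact Subgroup.zpow_mem_zpowers _ _
  refine GoodN.descend n _ (K ⊔ Subgroup.zpowers z) (sup_le_sup_left hzz _) ?_
    (hle'.trans (ZK_mono le_sup_left)) h
  have : K ⊔ Subgroup.zpowers z = Subgroup.zpowers z ⊔ (K ⊔ Subgroup.zpowers (z ^ i)) := by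
    rw [sup_left_comm, sup_eq_left.mpr hzz]
  rw [this, Subgroup.relIndex_sup_right]
  exact fun h0 => relIndex_zpowers z i hi
    (Subgroup.relIndex_eq_zero_of_le_left le_sup_right h0)

theorem GoodN.add_finset (T : Finset G) : ∀ (K : Subgroup G) [K.Normal], (∀ t ∈ T, t ∈ ZK K) →
    (∃ n, GoodN n (K ⊔ Subgroup.closure (T : Set G))) → ∃ n, GoodN n K := by
  classical
  induction T using Finset.induction_on with
  | empty =>
    intro K _ _ h
    simpa using h
  | insert t T _ ih =>
    intro K hK hT h
    have htZ := hT t (Finset.mem_insert_self _ _)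
    have hle' : K ⊔ Subgroup.zpowers t ≤ ZK K := sup_le (le_ZK K) (by
      rw [Subgroup.zpowers_le]; exact htZ)
    have hN : (K ⊔ Subgroup.zpowers t).Normal := normal_of_le_ZK le_sup_left hle'
    have e : K ⊔ Subgroup.closure ((insert t T : Finset G) : Set G) =
        (K ⊔ Subgroup.zpowers t) ⊔ Subgroup.closure (T : Set G) := by
      rw [Finset.coe_insert, Set.insert_eq, Subgroup.closure_union,
        ← Subgroup.zpowers_eq_closure, sup_assoc]
    rw [e] at h
    obtain ⟨n, hn⟩ := ih _ (fun s hs => ZK_mono le_sup_left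
      (hT s (Finset.mem_insert_of_mem hs))) h
    exact ⟨n + 1, GoodN.add_one n K t htZ hn⟩

theorem lcs_le_ZK (j : ℕ) : (⊤ : Subgroup G).lowerCentralSeries j ≤
    ZK ((⊤ : Subgroup G).lowerCentralSeries (j + 1)) := by
  intro m hm
  rw [mem_ZK]
  intro g
  rw [Subgroup.lowerCentralSeries_succ]
  exact Subgroup.commutator_mem_commutator hm (Subgroup.mem_top g)

theorem lcs_fg (S : Finset G) (hS : Subgroup.closure (S : Set G) = ⊤) (j : ℕ) :
    ∃ T : Finset G, (∀ t ∈ T, t ∈ (⊤ : Subgroup G).lowerCentralSeries j) ∧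
      (⊤ : Subgroup G).lowerCentralSeries j ≤
        (⊤ : Subgroup G).lowerCentralSeries (j + 1) ⊔ Subgroup.closure (T : Set G) := by
  classical
  induction j with
  | zero =>
    refine ⟨S, fun t _ => by simp, ?_⟩
    rw [hS]
    simp
  | succ j ih =>
    obtain ⟨T, hT, hle⟩ := ih
    set γ := (⊤ : Subgroup G).lowerCentralSeries with hγ
    refine ⟨(T ×ˢ S).image (fun p => ⁅p.1, p.2⁆), ?_, ?_⟩
    · intro t ht
      obtain ⟨⟨a, b⟩, hab, rfl⟩ := Finset.mem_image.mp ht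
      rw [Finset.mem_product] at hab
      rw [hγ, Subgroup.lowerCentralSeries_succ]
      exact Subgroup.commutator_mem_commutator (hT a hab.1) (Subgroup.mem_top b)
    · set T' := (T ×ˢ S).image (fun p => ⁅p.1, p.2⁆) with hT'
      set M := γ (j + 1 + 1) ⊔ Subgroup.closure (T' : Set G) with hM
      have hT'le : Subgroup.closure (T' : Set G) ≤ γ (j + 1) := by
        rw [Subgroup.closure_le]
        intro t ht
        obtain ⟨⟨a, b⟩, hab, rfl⟩ := Finset.mem_image.mp ht
        rw [Finset.mem_product] at hab
        show _ ∈ γ (j + 1)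
        rw [hγ, Subgroup.lowerCentralSeries_succ]
        exact Subgroup.commutator_mem_commutator (hT a hab.1) (Subgroup.mem_top b)
      have hMn : M.Normal := normal_of_le_ZK (K := γ (j + 1 + 1)) le_sup_left
        (sup_le (le_ZK _) (hT'le.trans (lcs_le_ZK (j + 1))))
      have hgen : γ j ≤ ZK M := by
        refine hle.trans (sup_le ((lcs_le_ZK (j + 1)).trans (ZK_mono le_sup_left)) ?_)
        rw [Subgroup.closure_le]
        intro t ht
        show t ∈ ZK M
        rw [mem_ZK]
        have hc : Subgroup.closure (S : Set G) ≤
            (Subgroup.centralizer {QuotientGroup.mk' M t}).comap (QuotientGroup.mk' M) := by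
          rw [Subgroup.closure_le]
          intro s hs
          show s ∈ Subgroup.comap _ _
          rw [Subgroup.mem_comap, Subgroup.mem_centralizer_singleton_iff]
          have : ⁅t, s⁆ ∈ M := by
            refine (le_sup_right : _ ≤ M) (Subgroup.subset_closure ?_)
            exact Finset.mem_image.mpr ⟨(t, s), Finset.mem_product.mpr ⟨ht, hs⟩, rfl⟩
          rw [comm_mem_iff] at this
          exact this.eq.symm
        intro g
        have hg : g ∈ Subgroup.closure (S : Set G) := by rw [hS]; exact Subgroup.mem_top g
        have := hc hg
        rw [Subgroup.mem_comap, Subgroup.mem_centralizer_singleton_iff] at this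
        rw [comm_mem_iff]
        exact this.symm
      have : γ (j + 1) = ⁅γ j, ⊤⁆ := Subgroup.lowerCentralSeries_succ _ _
      rw [this, Subgroup.commutator_le]
      intro a ha b _
      exact (mem_ZK M a).mp (hgen ha) b

theorem HM_fg_nilpotent (hfg : Group.FG G) (hn : Group.IsNilpotent G) : HM G := by
  classical
  obtain ⟨S, hS, hSf⟩ := Group.fg_iff.mp hfg
  obtain ⟨c, hc⟩ := Subgroup.nilpotent_iff_lowerCentralSeries.mp hn
  have key : ∀ j, ∃ n, GoodN n ((⊤ : Subgroup G).lowerCentralSeries j) := by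
    intro j
    induction j with
    | zero =>
      refine ⟨0, inferInstance, ?_⟩
      rw [Subgroup.lowerCentralSeries_zero]
      infer_instance
    | succ j ih =>
      obtain ⟨T, hT, hle⟩ := lcs_fg hSf.toFinset (by rw [Set.Finite.coe_toFinset]; exact hS) j
      refine GoodN.add_finset T _ (fun t ht => lcs_le_ZK j (hT t ht)) ?_
      have e : (⊤ : Subgroup G).lowerCentralSeries (j + 1) ⊔ Subgroup.closure (T : Set G) =
          (⊤ : Subgroup G).lowerCentralSeries j := by
        refine le_antisymm (sup_le ?_ ?_) hle
        · exact Subgroup.lowerCentralSeries_antitone _ (Nat.le_succ j)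
        · rw [Subgroup.closure_le]
          exact hT
      rwa [e]
  obtain ⟨n, h⟩ := key c
  rw [hc] at h
  exact GoodN.hm n ⊥ h G (MonoidHom.id G) Function.surjective_id (by simp)

end alg

section fgred
variable {G X : Type} [Group G] [MetricSpace X] [MulAction G X]

/-- points which are small off the subgroup `L`. -/
abbrev OffL (L : Subgroup G) (x₀ : X) (Δ : ℝ) : Type :=
  {x : X // ∀ g : G, g ∉ L → dist (g • x) x₀ ≤ Δ / 4}

theorem OffL_compact [CompactSpace X] (L : Subgroup G) (x₀ : X) (Δ : ℝ)
    (cont : ∀ g : G, Continuous fun x : X => g • x) : CompactSpace (OffL L x₀ Δ) := by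
  have : IsClosed {x : X | ∀ g : G, g ∉ L → dist (g • x) x₀ ≤ Δ / 4} := by
    have e : {x : X | ∀ g : G, g ∉ L → dist (g • x) x₀ ≤ Δ / 4} =
        ⋂ g : G, ⋂ (_ : g ∉ L), {x : X | dist (g • x) x₀ ≤ Δ / 4} := by
      ext x; simp
    rw [e]
    exact isClosed_iInter fun g => isClosed_iInter fun _ =>
      isClosed_le ((cont g).dist continuous_const) continuous_const
  exact isCompact_iff_compactSpace.mp this.isCompact

/-- the restricted action -/
@[reducible] def OffLAction (L : Subgroup G) (x₀ : X) (Δ : ℝ) : MulAction L (OffL L x₀ Δ) where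
  smul l y := ⟨(l : G) • y.1, fun g hg => by
    rw [smul_smul]
    exact y.2 _ fun h => hg ((Subgroup.mul_mem_cancel_right L l.2).mp h)⟩
  one_smul y := Subtype.ext (one_smul G y.1)
  mul_smul l l' y := Subtype.ext (mul_smul (l : G) (l' : G) y.1)

theorem HM_off [CompactSpace X] {x₀ : X} {f : X → X} {Δ : ℝ} (s : Sys G X x₀ f Δ)
    (L : Subgroup G) (hL : HM L) (N Nf F : Finset G) (hN : Glues x₀ Δ (Δ / 4) N)
    (hNL : ∀ n ∈ N, n ∈ L)
    (hNf : ∀ (x y : X) (g : G), (∀ n ∈ Nf, dist ((n * g) • x) ((n * g) • y) ≤ Δ) →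
      dist (g • f^[1] x) (g • f^[1] y) < Δ / 4) (hNfL : ∀ n ∈ Nf, n ∈ L)
    (x : X) (hF : ∀ g, g ∉ F → dist (g • x) x₀ ≤ Δ / 4) (hFL : ∀ n ∈ F, n ∈ L) :
    ∃ n, f^[n] x = x₀ := by
  classical
  have hp := s.pos
  have := OffL_compact L x₀ Δ s.cont
  let _ : MulAction L (OffL L x₀ Δ) := OffLAction L x₀ Δ
  have hact : ∀ (l : L) (y : OffL L x₀ Δ), (l • y).1 = (l : G) • y.1 := fun _ _ => rfl
  let y₀ : OffL L x₀ Δ := ⟨x₀, fun g _ => by rw [s.fix, dist_self]; positivity⟩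
  let F' : OffL L x₀ Δ → OffL L x₀ Δ := fun y => ⟨f y.1, fun g hg => by
    have := hNf y.1 x₀ g (by
      intro n hn
      rw [s.fix]
      have := y.2 (n * g) (fun h => hg ((Subgroup.mul_mem_cancel_left L (hNfL n hn)).mp h))
      linarith)
    rw [s.iter0, s.fix] at this
    exact this.le⟩
  have hiter : ∀ (n : ℕ) (y : OffL L x₀ Δ), (F'^[n] y).1 = f^[n] y.1 := by
    intro n
    induction n with
    | zero => intro y; rfl
    | succ n ih => intro y; rw [Function.iterate_succ_apply, Function.iterate_succ_apply, ih]
  have hdist : ∀ y y' : OffL L x₀ Δ, dist y y' = dist y.1 y'.1 := fun _ _ => rfl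
  have hcval : Continuous (fun y : OffL L x₀ Δ => y.1) := continuous_subtype_val
  have cont : ∀ g : L, Continuous fun y : OffL L x₀ Δ => g • y := by
    intro g
    exact Continuous.subtype_mk (p := fun x : X => ∀ g : G, g ∉ L → dist (g • x) x₀ ≤ Δ / 4)
      (f := fun y : OffL L x₀ Δ => (g • y).1) ((s.cont (g : G)).comp hcval) (fun y => (g • y).2)
  have fix : ∀ g : L, g • y₀ = y₀ := fun g => Subtype.ext (s.fix (g : G))
  have exp : ∀ y y' : OffL L x₀ Δ, (∀ g : L, dist (g • y) (g • y') ≤ Δ) → y = y' := by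
    intro y y' h
    apply Subtype.ext
    apply s.exp
    intro g
    by_cases hg : g ∈ L
    · exact h ⟨g, hg⟩
    · have a := y.2 g hg
      have b := y'.2 g hg
      have := dist_triangle_right (g • y.1) (g • y'.1) x₀
      linarith
  have hg0 : Glues y₀ Δ (Δ / 4) (N.subtype (· ∈ L)) := by
    intro I S p h1 h2
    have hhit : ∀ i (g : L), Hit N (Subtype.val '' S i) (g : G) →
        Hit (N.subtype (· ∈ L)) (S i) g := by
      rintro i g ⟨n, hn, a, ha, e⟩
      refine ⟨⟨n, hNL n hn⟩, by simpa using hn, ?_⟩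
      have : (⟨n, hNL n hn⟩ : L) * g = a := Subtype.ext e.symm
      rwa [this]
    have hin : ∀ i (g : G), Hit N (Subtype.val '' S i) g → g ∈ L := by
      rintro i g ⟨n, hn, a, ha, e⟩
      have : n * g ∈ L := e ▸ a.2
      exact (Subgroup.mul_mem_cancel_left L (hNL n hn)).mp this
    obtain ⟨y, y1, y2⟩ := hN I (fun i => Subtype.val '' S i) (fun i => (p i).1) (by
      intro i g hg
      by_cases hgL : g ∈ L
      · exact h1 i ⟨g, hgL⟩ fun h => hg ⟨_, h, rfl⟩
      · exact (p i).2 g hgL) (by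
      intro i j hij g hi hj
      exact h2 i j hij ⟨g, hin i g hi⟩ (hhit i ⟨g, hin i g hi⟩ hi) (hhit j ⟨g, hin i g hi⟩ hj))
    refine ⟨⟨y, fun g hg => (y2 g fun j hj => hg (hin j g hj)).le⟩, ?_, ?_⟩
    · intro i g hg
      exact y1 i g fun j hj hh => hg j hj (hhit j g hh)
    · intro g hg
      exact y2 g fun j hh => hg j (hhit j g hh)
  have sys : Sys L (OffL L x₀ Δ) y₀ F' Δ :=
    { cont := cont
      fix := fix
      pos := hp
      exp := exp
      glue := fun η hη => glue_all cont fix exp (by linarith) hg0 η hη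
      fc := Continuous.subtype_mk (s.fc.comp hcval) _
      f0 := Subtype.ext s.f0
      feq := fun g y => Subtype.ext (s.feq (g : G) y.1)
      AN := by
        intro y
        refine tendsto_subtype_rng.mpr ?_
        have := s.AN y.1
        simp only [← hiter] at this
        exact this }
  obtain ⟨n, hn⟩ := hL _ y₀ F' Δ sys ⟨x, fun g hg => hF g fun h => hg (hFL g h)⟩
    ⟨F.subtype (· ∈ L), by
      intro g hg
      refine hF g fun h => hg ?_
      simpa using h⟩
  refine ⟨n, ?_⟩
  have := congrArg Subtype.val hn
  rwa [hiter] at this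

theorem HM_nilpotent (hn : Group.IsNilpotent G) : HM G := by
  classical
  intro X _ _ _ x₀ f Δ s x ⟨F, hF⟩
  have hp := s.pos
  obtain ⟨N, hN⟩ := s.glue (Δ / 4) (by positivity)
  obtain ⟨Nf, hNf⟩ := s.E2 1 (Δ / 4) (by positivity)
  have hsub : ∀ n ∈ N ∪ Nf ∪ F, n ∈ Subgroup.closure ((N ∪ Nf ∪ F : Finset G) : Set G) :=
    fun n h => Subgroup.subset_closure h
  refine HM_off s (Subgroup.closure ((N ∪ Nf ∪ F : Finset G) : Set G)) ?_ N Nf F hN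
    (fun n h => hsub n (by simp [h])) hNf (fun n h => hsub n (by simp [h])) x hF
    (fun n h => hsub n (by simp [h]))
  refine HM_fg_nilpotent ?_ inferInstance
  rw [Group.fg_iff_subgroup_fg]
  exact ⟨_, rfl⟩

end fgred

section final
variable {G X : Type} [Group G] [MetricSpace X] [CompactSpace X] [MulAction G X]
  {x₀ : X} {f : X → X} {Δ : ℝ}

theorem Sys.restrict (s : Sys G X x₀ f Δ) (H : Subgroup G) (hH : H.FiniteIndex) :
    ∃ Δ', Sys H X x₀ f Δ' := by
  classical
  have hp := s.pos
  obtain ⟨C, hC1, hC⟩ : ∃ C : Finset G, 1 ∈ C ∧ ∀ g : G, ∃ c ∈ C, ∃ h : H, g = c * h := by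
    have : Fintype (G ⧸ H) := Fintype.ofFinite _
    refine ⟨insert 1 (Finset.univ.image (fun q : G ⧸ H => q.out)), by simp, fun g => ?_⟩
    obtain ⟨h, hh⟩ := QuotientGroup.mk_out_eq_mul H g
    refine ⟨((g : G ⧸ H)).out, by simp, h⁻¹, ?_⟩
    rw [hh]; simp
  obtain ⟨ρ, hρ, hCρ⟩ : ∃ ρ > 0, ∀ x y : X, dist x y ≤ ρ → ∀ c ∈ C,
      dist (c • x) (c • y) ≤ Δ / 4 := by
    clear hC hC1
    induction C using Finset.induction_on with
    | empty => exact ⟨1, one_pos, by simp⟩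
    | insert a C _ ih =>
      obtain ⟨ρ, hρ, h⟩ := ih
      have huc := CompactSpace.uniformContinuous_of_continuous (s.cont a)
      obtain ⟨r, hr, h'⟩ := Metric.uniformContinuous_iff.mp huc (Δ / 4) (by positivity)
      refine ⟨min ρ (r / 2), by positivity, fun x y hxy c hc => ?_⟩
      rcases Finset.mem_insert.mp hc with rfl | hc
      · exact (h' (lt_of_le_of_lt (hxy.trans (min_le_right _ _)) (by linarith))).le
      · exact h x y (hxy.trans (min_le_left _ _)) c hc
  refine ⟨ρ, ?_⟩
  exact
    { cont := fun g => s.cont (g : G)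
      fix := fun g => s.fix (g : G)
      pos := hρ
      exp := by
        intro x y h
        apply s.exp
        intro g
        obtain ⟨c, hc, k, rfl⟩ := hC g
        have := hCρ _ _ (h k) c hc
        rw [mul_smul, mul_smul]
        exact this.trans (by linarith)
      glue := by
        intro η hη
        obtain ⟨N, hN⟩ := s.glue η hη
        refine ⟨(C⁻¹ * N * C).subtype (· ∈ H), ?_⟩
        intro I S p h1 h2
        have hhit : ∀ i, ∀ c1 ∈ C, ∀ h : H,
            Hit N {g : G | ∃ c ∈ C, ∃ k ∈ S i, g = c * (k : G)} (c1 * h) →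
            Hit ((C⁻¹ * N * C).subtype (· ∈ H)) (S i) h := by
          rintro i c1 hc1 h ⟨n, hn, c, hc, k, hk, e⟩
          have e2 : c⁻¹ * n * c1 = (k * h⁻¹ : H) := by
            rw [← mul_assoc] at e
            have : n * c1 = c * k * (h : G)⁻¹ := by rw [← e]; group
            rw [mul_assoc, this]; push_cast; group
          refine ⟨k * h⁻¹, ?_, ?_⟩
          · rw [Finset.mem_subtype, ← e2]
            exact Finset.mul_mem_mul (Finset.mul_mem_mul (Finset.inv_mem_inv hc) hn) hc1
          · rw [inv_mul_cancel_right]; exact hk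
        obtain ⟨y, y1, y2⟩ := hN I (fun i => {g : G | ∃ c ∈ C, ∃ k ∈ S i, g = c * (k : G)}) p (by
          intro i g hg
          obtain ⟨c, hc, k, rfl⟩ := hC g
          have h3 := h1 i k fun hk => hg ⟨c, hc, k, hk, rfl⟩
          have := hCρ (k • p i) x₀ (h3.trans (by linarith)) c hc
          rw [s.fix] at this
          rw [mul_smul]
          exact this) (by
          intro i j hij g hi hj
          obtain ⟨c, hc, k, rfl⟩ := hC g
          exact h2 i j hij k (hhit i c hc k hi) (hhit j c hc k hj))
        refine ⟨y, fun i g hg => ?_, fun g hg => ?_⟩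
        · exact y1 i g fun j hj hh => hg j hj (hhit j 1 hC1 g (by rwa [one_mul]))
        · exact y2 g fun j hh => hg j (hhit j 1 hC1 g (by rwa [one_mul]))
      fc := s.fc
      f0 := s.f0
      feq := fun g x => s.feq (g : G) x
      AN := s.AN }

theorem Sys.finish (s : Sys G X x₀ f Δ) (hm : HM G) (hd : Dense {x | HomP G x₀ Δ x}) :
    ∃ n : ℕ, ∀ x : X, f^[n] x = x₀ := by
  have hp := s.pos
  obtain ⟨R, T, hR⟩ := s.block
  have hR' : ∀ x : X, (∀ a ∈ R, dist (a • x) x₀ < Δ / 4) →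
      ∀ t ≥ T, dist (f^[t] x) x₀ ≤ Δ / 8 := by
    intro x hx t ht
    have := hR x (fun c hc => by
      obtain ⟨y, hy, hy'⟩ := Metric.dense_iff.mp hd x c hc
      exact ⟨y, hy', hm X x₀ f Δ s y hy', hy⟩) 1 (by simpa using hx) t ht
    simpa using this
  have hopen : ∀ n : ℕ, IsOpen {x : X | ∀ a ∈ R, dist (a • f^[n] x) x₀ < Δ / 4} := by
    intro n
    have e : {x : X | ∀ a ∈ R, dist (a • f^[n] x) x₀ < Δ / 4} =
        ⋂ a ∈ R, {x : X | dist (a • f^[n] x) x₀ < Δ / 4} := by ext x; simp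
    rw [e]
    exact isOpen_biInter_finset fun a _ =>
      isOpen_lt (((s.cont a).comp (s.iterc n)).dist continuous_const) continuous_const
  obtain ⟨A, hA⟩ := isCompact_univ.elim_finite_subcover
    (fun n : ℕ => {x : X | ∀ a ∈ R, dist (a • f^[n] x) x₀ < Δ / 4}) hopen (by
      intro x _
      obtain ⟨n, hn⟩ := s.ev R (Δ / 4) (by positivity) x
      exact Set.mem_iUnion.mpr ⟨n, hn n le_rfl⟩)
  have key : ∀ x : X, dist (f^[A.sup id + T] x) x₀ ≤ Δ / 8 := by
    intro x
    have := hA (Set.mem_univ x)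
    simp only [Set.mem_iUnion] at this
    obtain ⟨n, hn, hx⟩ := this
    have hle : n ≤ A.sup id := Finset.le_sup (f := id) hn
    have e : A.sup id + T = (A.sup id + T - n) + n := by omega
    rw [e, Function.iterate_add_apply]
    exact hR' _ hx _ (by omega)
  refine ⟨A.sup id + T, fun x => s.exp _ _ fun g => ?_⟩
  rw [← s.itereq, s.fix]
  exact (key _).trans (by linarith)

end final


end material

/-- Let `G` be a virtually nilpotent group and `(G, X, 0)` an expansive
`0`-gluing pointed dynamical system with dense homoclinic points. Then every
asymptotically nilpotent endomorphism of the system is nilpotent. -/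
theorem statement19 {G X : Type} [Group G] [MetricSpace X] [CompactSpace X]
    [MulAction G X]
    (hcont : ∀ g : G, Continuous fun x : X => g • x)
    (x₀ : X) (hx₀ : ∀ g : G, g • x₀ = x₀)
    (hvn : ∃ H : Subgroup G, H.FiniteIndex ∧ Group.IsNilpotent H)
    (hexp : ∃ Δ : ℝ, 0 < Δ ∧
      ∀ x y : X, (∀ g : G, dist (g • x) (g • y) ≤ Δ) → x = y)
    (hglue : ZeroGluing G x₀)
    (hhomo : Dense {x : X | Homoclinic G x₀ x})
    (f : X → X) (hf : Continuous f) (hf₀ : f x₀ = x₀)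
    (hfeq : ∀ (g : G) (x : X), f (g • x) = g • f x)
    (hAN : ∀ x : X, Filter.Tendsto (fun n => f^[n] x) Filter.atTop (nhds x₀)) :
    ∃ n : ℕ, ∀ x : X, f^[n] x = x₀ := by
  obtain ⟨H, hH, hn⟩ := hvn
  obtain ⟨Δ, hΔ, hexp⟩ := hexp
  have s : Sys G X x₀ f Δ :=
    { cont := hcont
      fix := hx₀
      pos := hΔ
      exp := hexp
      glue := fun η hη => glues_of_zeroGluing hΔ hcont hx₀ hexp hglue η hη
      fc := hf
      f0 := hf₀
      feq := hfeq
      AN := hAN }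
  obtain ⟨Δ', s'⟩ := s.restrict H hH
  refine s'.finish (HM_nilpotent hn) (hhomo.mono ?_)
  intro x hx
  classical
  have hp := s'.pos
  obtain ⟨E, hE⟩ := hx (Δ' / 4) (by positivity)
  refine ⟨E.subtype (· ∈ H), fun g hg => (hE g fun h => hg ?_).le⟩
  simpa using h
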